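/- arXiv:2107.10305 — 2 statements merged into one kernel-verified Lean document; each statement's English description precedes it below -/
import Mathlib

section
/- For every nonzero quadruple (s₁,s₂,s₃,s₄) ∈ ℤ⁴, define the integer weights γ_a = s₁+2s₃, γ_b = s₂+2s₃, γ_c = −s₁−s₂+2s₃, γ_d = s₁+2s₄, γ_e = s₂+2s₄, γ_f = −s₁−s₂+2s₄, γ_g = s₁−2s₃−2s₄, γ_h = s₂−2s₃−2s₄, γ_i = −s₁−s₂−2s₃−2s₄, γ_j = s₁+s₃+s₄, γ_k = s₂+s₃+s₄, γ_l = −s₁−s₂+s₃+s₄, γ_m = s₁−s₄, γ_n = s₂−s₄, γ_o = −s₁−s₂−s₄, γ_p = s₁−s₃, γ_q = s₂−s₃, γ_r = −s₁−s₂−s₃. If v ∈ V₃ has coefficients a,…,r such that, for every x ∈ {a,b,c,d,e,f,g,h,i,j,k,l,m,n,o,p,q,r}, the coefficient x is 0 whenever γ_x < 0, then Δ₃(v) = 0. -/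
/- The degree-4 Aronhold invariant S of the ternary cubic
   A X³ + B X²Y + C X²Z + D XY² + E XYZ + F XZ² + G Y³ + H Y²Z + I YZ² + J Z³. -/
def aronholdS {R : Type*} [CommRing R] (A B C D E F G H I J : R) : R :=
  E ^ 4 - 8 * D * E ^ 2 * F + 16 * D ^ 2 * F ^ 2 + 24 * C * E * F * G
       - 8 * C * E ^ 2 * H - 16 * C * D * F * H + 24 * C * D * E * I - 48 * C * D ^ 2 * J
       + 16 * C ^ 2 * H ^ 2 - 48 * C ^ 2 * G * I - 48 * B * F ^ 2 * G + 24 * B * E * F * H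
       - 8 * B * E ^ 2 * I - 16 * B * D * F * I + 24 * B * D * E * J - 16 * B * C * H * I
       + 144 * B * C * G * J + 16 * B ^ 2 * I ^ 2 - 48 * B ^ 2 * H * J - 48 * A * F * H ^ 2
       + 144 * A * F * G * I + 24 * A * E * H * I - 216 * A * E * G * J - 48 * A * D * I ^ 2
       + 144 * A * D * H * J

set_option maxHeartbeats 1600000 in
/- The degree-6 Aronhold invariant T of the same ternary cubic. -/
def aronholdT {R : Type*} [CommRing R] (A B C D E F G H I J : R) : R :=
  -E ^ 6 + 12 * D * E ^ 4 * F - 48 * D ^ 2 * E ^ 2 * F ^ 2 + 64 * D ^ 3 * F ^ 3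
       - 36 * C * E ^ 3 * F * G + 12 * C * E ^ 4 * H + 144 * C * D * E * F ^ 2 * G - 24 * C * D * E ^ 2 * F * H
       - 36 * C * D * E ^ 3 * I - 96 * C * D ^ 2 * F ^ 2 * H + 144 * C * D ^ 2 * E * F * I + 72 * C * D ^ 2 * E ^ 2 * J
       - 288 * C * D ^ 3 * F * J - 216 * C ^ 2 * F ^ 2 * G ^ 2 + 144 * C ^ 2 * E * F * G * H - 48 * C ^ 2 * E ^ 2 * H ^ 2
       + 72 * C ^ 2 * E ^ 2 * G * I - 96 * C ^ 2 * D * F * H ^ 2 + 144 * C ^ 2 * D * F * G * I + 144 * C ^ 2 * D * E * H * I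
       - 864 * C ^ 2 * D * E * G * J - 216 * C ^ 2 * D ^ 2 * I ^ 2 + 576 * C ^ 2 * D ^ 2 * H * J + 64 * C ^ 3 * H ^ 3
       - 288 * C ^ 3 * G * H * I + 864 * C ^ 3 * G ^ 2 * J + 72 * B * E ^ 2 * F ^ 2 * G - 36 * B * E ^ 3 * F * H
       + 12 * B * E ^ 4 * I - 288 * B * D * F ^ 3 * G + 144 * B * D * E * F ^ 2 * H - 24 * B * D * E ^ 2 * F * I
       - 36 * B * D * E ^ 3 * J - 96 * B * D ^ 2 * F ^ 2 * I + 144 * B * D ^ 2 * E * F * J + 144 * B * C * F ^ 2 * G * H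
       + 144 * B * C * E * F * H ^ 2 - 720 * B * C * E * F * G * I - 24 * B * C * E ^ 2 * H * I + 648 * B * C * E ^ 2 * G * J
       - 48 * B * C * D * F * H * I + 1296 * B * C * D * F * G * J + 144 * B * C * D * E * I ^ 2 - 720 * B * C * D * E * H * J
       + 144 * B * C * D ^ 2 * I * J - 96 * B * C ^ 2 * H ^ 2 * I + 576 * B * C ^ 2 * G * I ^ 2 - 864 * B * C ^ 2 * G * H * J
       - 216 * B ^ 2 * F ^ 2 * H ^ 2 + 576 * B ^ 2 * F ^ 2 * G * I + 144 * B ^ 2 * E * F * H * I - 864 * B ^ 2 * E * F * G * J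
       - 48 * B ^ 2 * E ^ 2 * I ^ 2 + 72 * B ^ 2 * E ^ 2 * H * J - 96 * B ^ 2 * D * F * I ^ 2 + 144 * B ^ 2 * D * F * H * J
       + 144 * B ^ 2 * D * E * I * J - 216 * B ^ 2 * D ^ 2 * J ^ 2 - 96 * B ^ 2 * C * H * I ^ 2 + 576 * B ^ 2 * C * H ^ 2 * J
       - 864 * B ^ 2 * C * G * I * J + 64 * B ^ 3 * I ^ 3 - 288 * B ^ 3 * H * I * J + 864 * B ^ 3 * G * J ^ 2
       + 864 * A * F ^ 3 * G ^ 2 - 864 * A * E * F ^ 2 * G * H + 72 * A * E ^ 2 * F * H ^ 2 + 648 * A * E ^ 2 * F * G * I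
       - 36 * A * E ^ 3 * H * I - 540 * A * E ^ 3 * G * J + 576 * A * D * F ^ 2 * H ^ 2 - 864 * A * D * F ^ 2 * G * I
       - 720 * A * D * E * F * H * I + 1296 * A * D * E * F * G * J + 72 * A * D * E ^ 2 * I ^ 2 + 648 * A * D * E ^ 2 * H * J
       + 576 * A * D ^ 2 * F * I ^ 2 - 864 * A * D ^ 2 * F * H * J - 864 * A * D ^ 2 * E * I * J + 864 * A * D ^ 3 * J ^ 2
       - 288 * A * C * F * H ^ 3 + 1296 * A * C * F * G * H * I - 3888 * A * C * F * G ^ 2 * J + 144 * A * C * E * H ^ 2 * I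
       - 864 * A * C * E * G * I ^ 2 + 1296 * A * C * E * G * H * J + 144 * A * C * D * H * I ^ 2 - 864 * A * C * D * H ^ 2 * J
       + 1296 * A * C * D * G * I * J + 144 * A * B * F * H ^ 2 * I - 864 * A * B * F * G * I ^ 2 + 1296 * A * B * F * G * H * J
       + 144 * A * B * E * H * I ^ 2 - 864 * A * B * E * H ^ 2 * J + 1296 * A * B * E * G * I * J - 288 * A * B * D * I ^ 3
       + 1296 * A * B * D * H * I * J - 3888 * A * B * D * G * J ^ 2 - 216 * A ^ 2 * H ^ 2 * I ^ 2 + 864 * A ^ 2 * H ^ 3 * J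
       + 864 * A ^ 2 * G * I ^ 3 - 3888 * A ^ 2 * G * H * I * J + 5832 * A ^ 2 * G ^ 2 * J ^ 2

/- The coefficients A,…,J (as polynomials in the 18 coordinates a,…,r of a vector
v ∈ V₃, here `c 0, …, c 17`) of the ternary cubic disc₂(v) in X, Y, Z, where disc₂ is the
discriminant of v regarded as a quadratic form in (T,U,W):
disc₂(q) = 4ABC + DEF − AF² − BE² − CD² for q = A T² + B U² + C W² + D TU + E TW + F UW. -/
def v3DiscCoeffs {L : Type*} [CommRing L] (c : Fin 18 → L) : Fin 10 → L :=
  ![c 9 * c 12 * c 15 - c 6 * c 9 ^ 2 - c 3 * c 12 ^ 2 - c 0 * c 15 ^ 2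
       + 4 * c 0 * c 3 * c 6,
    c 10 * c 12 * c 15 + c 9 * c 13 * c 15 + c 9 * c 12 * c 16 - c 7 * c 9 ^ 2
       - 2 * c 6 * c 9 * c 10 - c 4 * c 12 ^ 2 - 2 * c 3 * c 12 * c 13 - c 1 * c 15 ^ 2
       + 4 * c 1 * c 3 * c 6 - 2 * c 0 * c 15 * c 16 + 4 * c 0 * c 4 * c 6 + 4 * c 0 * c 3 * c 7,
    c 11 * c 12 * c 15 + c 9 * c 14 * c 15 + c 9 * c 12 * c 17 - c 8 * c 9 ^ 2
       - 2 * c 6 * c 9 * c 11 - c 5 * c 12 ^ 2 - 2 * c 3 * c 12 * c 14 - c 2 * c 15 ^ 2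
       + 4 * c 2 * c 3 * c 6 - 2 * c 0 * c 15 * c 17 + 4 * c 0 * c 5 * c 6 + 4 * c 0 * c 3 * c 8,
    c 10 * c 13 * c 15 + c 10 * c 12 * c 16 + c 9 * c 13 * c 16 - 2 * c 7 * c 9 * c 10
       - c 6 * c 10 ^ 2 - 2 * c 4 * c 12 * c 13 - c 3 * c 13 ^ 2 - 2 * c 1 * c 15 * c 16
       + 4 * c 1 * c 4 * c 6 + 4 * c 1 * c 3 * c 7 - c 0 * c 16 ^ 2 + 4 * c 0 * c 4 * c 7,
    c 11 * c 13 * c 15 + c 11 * c 12 * c 16 + c 10 * c 14 * c 15 + c 10 * c 12 * c 17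
       + c 9 * c 14 * c 16 + c 9 * c 13 * c 17 - 2 * c 8 * c 9 * c 10 - 2 * c 7 * c 9 * c 11
       - 2 * c 6 * c 10 * c 11 - 2 * c 5 * c 12 * c 13 - 2 * c 4 * c 12 * c 14 - 2 * c 3 * c 13 * c 14
       - 2 * c 2 * c 15 * c 16 + 4 * c 2 * c 4 * c 6 + 4 * c 2 * c 3 * c 7 - 2 * c 1 * c 15 * c 17
       + 4 * c 1 * c 5 * c 6 + 4 * c 1 * c 3 * c 8 - 2 * c 0 * c 16 * c 17 + 4 * c 0 * c 5 * c 7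
       + 4 * c 0 * c 4 * c 8,
    c 11 * c 14 * c 15 + c 11 * c 12 * c 17 + c 9 * c 14 * c 17 - 2 * c 8 * c 9 * c 11
       - c 6 * c 11 ^ 2 - 2 * c 5 * c 12 * c 14 - c 3 * c 14 ^ 2 - 2 * c 2 * c 15 * c 17
       + 4 * c 2 * c 5 * c 6 + 4 * c 2 * c 3 * c 8 - c 0 * c 17 ^ 2 + 4 * c 0 * c 5 * c 8,
    c 10 * c 13 * c 16 - c 7 * c 10 ^ 2 - c 4 * c 13 ^ 2 - c 1 * c 16 ^ 2
       + 4 * c 1 * c 4 * c 7,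
    c 11 * c 13 * c 16 + c 10 * c 14 * c 16 + c 10 * c 13 * c 17 - c 8 * c 10 ^ 2
       - 2 * c 7 * c 10 * c 11 - c 5 * c 13 ^ 2 - 2 * c 4 * c 13 * c 14 - c 2 * c 16 ^ 2
       + 4 * c 2 * c 4 * c 7 - 2 * c 1 * c 16 * c 17 + 4 * c 1 * c 5 * c 7 + 4 * c 1 * c 4 * c 8,
    c 11 * c 14 * c 16 + c 11 * c 13 * c 17 + c 10 * c 14 * c 17 - 2 * c 8 * c 10 * c 11
       - c 7 * c 11 ^ 2 - 2 * c 5 * c 13 * c 14 - c 4 * c 14 ^ 2 - 2 * c 2 * c 16 * c 17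
       + 4 * c 2 * c 5 * c 7 + 4 * c 2 * c 4 * c 8 - c 1 * c 17 ^ 2 + 4 * c 1 * c 5 * c 8,
    c 11 * c 14 * c 17 - c 8 * c 11 ^ 2 - c 5 * c 14 ^ 2 - c 2 * c 17 ^ 2
       + 4 * c 2 * c 5 * c 8]

/- Δ₃ = disc₃ ∘ disc₂, where disc₃ is the integer polynomial with 1728·disc₃ = S³ − T²
(passed as the argument `disc3`), interpreted in L via ℤ → L. -/
noncomputable def Delta3 {L : Type*} [CommRing L]
    (disc3 : MvPolynomial (Fin 10) ℤ) (c : Fin 18 → L) : L :=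
  MvPolynomial.aeval (v3DiscCoeffs c) disc3

/-!
Let `t` and `u` be the weights of `X, Y, Z` and of `T, U, W`. The discriminant `disc₂` is
equivariant and `∑ u = 0`, so the cubic `disc₂ v` has no coefficient of negative `t`-weight. If
`t ≠ 0`, this makes a coordinate point singular on the cubic or a coordinate line a component of it.
If `t = 0`, then `u ≠ 0` forces two zeros, one of them diagonal, in a row of the symmetric matrix of
`v`, so that `disc₂ v` is a linear form times the square of another. In every case `S³ - T²`
vanishes.

Since `1728` may vanish in the base ring, it is cancelled over `ℤ[x₁, …, x₁₈]`, on the generic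
vector with the same zero coordinates as `v`.
-/

section

variable {R : Type*} [CommRing R]

/-- `S³ - T²`, that is `1728 disc₃`, on the ternary cubic with coefficient vector `u`. -/
def aronholdDisc (u : Fin 10 → R) : R :=
  aronholdS (u 0) (u 1) (u 2) (u 3) (u 4) (u 5) (u 6) (u 7) (u 8) (u 9) ^ 3 -
    aronholdT (u 0) (u 1) (u 2) (u 3) (u 4) (u 5) (u 6) (u 7) (u 8) (u 9) ^ 2

theorem map_aronholdDisc {R' : Type*} [CommRing R'] (f : R →+* R') (u : Fin 10 → R) :
    f (aronholdDisc u) = aronholdDisc (f ∘ u) := by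
  simp [aronholdDisc, aronholdS, aronholdT, map_ofNat]

/-- The position, in the coefficient vector of a ternary cubic, of the monomial `xᵢ xⱼ xₖ`, where
`(x₀, x₁, x₂) = (X, Y, Z)`. -/
def cubicIndex (i j k : Fin 3) : Fin 10 :=
  ![![![0, 1, 2], ![1, 3, 4], ![2, 4, 5]],
    ![![1, 3, 4], ![3, 6, 7], ![4, 7, 8]],
    ![![2, 4, 5], ![4, 7, 8], ![5, 8, 9]]] i j k

theorem aronholdDisc_eq_zero_of_eq_sq_of_eq_cube {u : Fin 10 → R} (q : R)
    (hS : aronholdS (u 0) (u 1) (u 2) (u 3) (u 4) (u 5) (u 6) (u 7) (u 8) (u 9) = q ^ 2)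
    (hT : aronholdT (u 0) (u 1) (u 2) (u 3) (u 4) (u 5) (u 6) (u 7) (u 8) (u 9) = -q ^ 3) :
    aronholdDisc u = 0 := by
  rw [aronholdDisc, hS, hT]
  ring

theorem aronholdDisc_eq_zero_of_singular_coordinate_point {u : Fin 10 → R} (i : Fin 3)
    (hu : ∀ j, u (cubicIndex i i j) = 0) : aronholdDisc u = 0 := by
  -- The square roots of `S` below are discriminants of the tangent cone at the singular point.
  fin_cases i
  · have hX : u 0 = 0 ∧ u 1 = 0 ∧ u 2 = 0 := ⟨hu 0, hu 1, hu 2⟩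
    apply aronholdDisc_eq_zero_of_eq_sq_of_eq_cube (u 4 ^ 2 - 4 * u 3 * u 5) <;>
      simp only [hX, aronholdS, aronholdT] <;> ring
  · have hY : u 3 = 0 ∧ u 6 = 0 ∧ u 7 = 0 := ⟨hu 0, hu 1, hu 2⟩
    apply aronholdDisc_eq_zero_of_eq_sq_of_eq_cube (u 4 ^ 2 - 4 * u 1 * u 8) <;>
      simp only [hY, aronholdS, aronholdT] <;> ring
  · have hZ : u 5 = 0 ∧ u 8 = 0 ∧ u 9 = 0 := ⟨hu 0, hu 1, hu 2⟩
    apply aronholdDisc_eq_zero_of_eq_sq_of_eq_cube (u 4 ^ 2 - 4 * u 2 * u 7) <;>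
      simp only [hZ, aronholdS, aronholdT] <;> ring

theorem aronholdDisc_eq_zero_of_coordinate_line {u : Fin 10 → R} (l : Fin 3)
    (hu : ∀ i j k, l ∉ [i, j, k] → u (cubicIndex i j k) = 0) : aronholdDisc u = 0 := by
  -- The square roots of `S` below are discriminants of the residual conic restricted to the line.
  fin_cases l
  · have hX : u 6 = 0 ∧ u 7 = 0 ∧ u 8 = 0 ∧ u 9 = 0 :=
      ⟨hu 1 1 1 (by decide), hu 1 1 2 (by decide), hu 1 2 2 (by decide), hu 2 2 2 (by decide)⟩
    apply aronholdDisc_eq_zero_of_eq_sq_of_eq_cube (u 4 ^ 2 - 4 * u 3 * u 5) <;>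
      simp only [hX, aronholdS, aronholdT] <;> ring
  · have hY : u 0 = 0 ∧ u 2 = 0 ∧ u 5 = 0 ∧ u 9 = 0 :=
      ⟨hu 0 0 0 (by decide), hu 0 0 2 (by decide), hu 0 2 2 (by decide), hu 2 2 2 (by decide)⟩
    apply aronholdDisc_eq_zero_of_eq_sq_of_eq_cube (u 4 ^ 2 - 4 * u 1 * u 8) <;>
      simp only [hY, aronholdS, aronholdT] <;> ring
  · have hZ : u 0 = 0 ∧ u 1 = 0 ∧ u 3 = 0 ∧ u 6 = 0 :=
      ⟨hu 0 0 0 (by decide), hu 0 0 1 (by decide), hu 0 1 1 (by decide), hu 1 1 1 (by decide)⟩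
    apply aronholdDisc_eq_zero_of_eq_sq_of_eq_cube (u 4 ^ 2 - 4 * u 2 * u 7) <;>
      simp only [hZ, aronholdS, aronholdT] <;> ring

theorem forall_fin_three {p : Fin 3 → Prop} : (∀ i, p i) ↔ p 0 ∧ p 1 ∧ p 2 := by
  simp [Fin.forall_fin_succ]

theorem exists_fin_three {p : Fin 3 → Prop} : (∃ i, p i) ↔ p 0 ∨ p 1 ∨ p 2 := by
  simp [Fin.exists_fin_succ]

theorem exists_two_mul_add_neg_or_exists_neg {t : Fin 3 → ℤ} (ht : ∑ i, t i = 0) (ht₀ : t ≠ 0) :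
    (∃ i, ∀ j, 2 * t i + t j < 0) ∨ ∃ l, ∀ i, l ≠ i → t i < 0 := by
  simp only [Fin.sum_univ_three, ne_eq, funext_iff, Pi.zero_apply, forall_fin_three,
    exists_fin_three, Fin.isValue, Fin.reduceEq, not_true_eq_false, not_false_eq_true,
    one_ne_zero, zero_ne_one, IsEmpty.forall_iff, forall_const, true_and, and_true] at ht ht₀ ⊢
  omega

theorem aronholdDisc_eq_zero_of_weight_neg {t : Fin 3 → ℤ} (ht : ∑ i, t i = 0) (ht₀ : t ≠ 0)
    {u : Fin 10 → R} (hu : ∀ i j k, t i + t j + t k < 0 → u (cubicIndex i j k) = 0) :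
    aronholdDisc u = 0 := by
  obtain ⟨i, hi⟩ | ⟨l, hl⟩ := exists_two_mul_add_neg_or_exists_neg ht ht₀
  · refine aronholdDisc_eq_zero_of_singular_coordinate_point i fun j => hu i i j ?_
    linarith [hi j]
  · refine aronholdDisc_eq_zero_of_coordinate_line l fun i j k hijk => hu i j k ?_
    obtain ⟨hi, hj, hk⟩ : l ≠ i ∧ l ≠ j ∧ l ≠ k := by simpa using hijk
    linarith [hl i hi, hl j hj, hl k hk]

/-- The coefficient vector of the product of three ternary linear forms. -/
def linearFormsMul (x y z : Fin 3 → R) (m : Fin 10) : R :=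
  ∑ i, ∑ j, ∑ k, if cubicIndex i j k = m then x i * y j * z k else 0

theorem aronholdDisc_linearFormsMul_self (x y : Fin 3 → R) :
    aronholdDisc (linearFormsMul x y y) = 0 := by
  apply aronholdDisc_eq_zero_of_eq_sq_of_eq_cube 0 <;>
    simp only [linearFormsMul, cubicIndex, Fin.sum_univ_three, Matrix.cons_val, Fin.isValue,
      Fin.reduceEq, zero_ne_one, one_ne_zero, ↓reduceIte, add_zero, zero_add, aronholdS,
      aronholdT] <;>
    ring

theorem multiset_eq_of_cubicIndex_eq : ∀ {i j k i' j' k' : Fin 3},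
    cubicIndex i j k = cubicIndex i' j' k' → ({i, j, k} : Multiset (Fin 3)) = {i', j', k'} := by
  decide

/-- The linear form in `X, Y, Z` that is the coefficient of `xᵢ xⱼ` in `v ∈ V₃`, where
`(x₀, x₁, x₂) = (T, U, W)`. -/
def v3Form {α : Type*} (c : Fin 18 → α) (i j k : Fin 3) : α :=
  c (![![0, 9, 12], ![9, 3, 15], ![12, 15, 6]] i j + k.castLE (by decide))

theorem v3Form_comm {α : Type*} (c : Fin 18 → α) (i j : Fin 3) :
    v3Form c i j = v3Form c j i := by
  fin_cases i <;> fin_cases j <;> rfl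

@[simp]
theorem linearFormsMul_zero_left (y z : Fin 3 → R) : linearFormsMul 0 y z = 0 := by
  ext; simp [linearFormsMul]

@[simp]
theorem linearFormsMul_zero_middle (x z : Fin 3 → R) : linearFormsMul x 0 z = 0 := by
  ext; simp [linearFormsMul]

@[simp]
theorem linearFormsMul_zero_right (x y : Fin 3 → R) : linearFormsMul x y 0 = 0 := by
  ext; simp [linearFormsMul]

theorem linearFormsMul_neg_left (x y z : Fin 3 → R) :
    linearFormsMul (-x) y z = -linearFormsMul x y z := by
  ext; simp [linearFormsMul, ← Finset.sum_neg_distrib, neg_ite]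

theorem linearFormsMul_cubicIndex_eq_zero_of_weight_neg {t : Fin 3 → ℤ} {a b d : ℤ}
    {x y z : Fin 3 → R} (hx : ∀ i, a + t i < 0 → x i = 0) (hy : ∀ i, b + t i < 0 → y i = 0)
    (hz : ∀ i, d + t i < 0 → z i = 0) {i j k : Fin 3}
    (h : a + b + d + (t i + t j + t k) < 0) : linearFormsMul x y z (cubicIndex i j k) = 0 := by
  refine Finset.sum_eq_zero fun i' _ => Finset.sum_eq_zero fun j' _ =>
    Finset.sum_eq_zero fun k' _ => ite_eq_right_iff.mpr fun hindex => ?_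
  have hweight : t i' + t j' + t k' = t i + t j + t k := by
    simpa [add_assoc] using congrArg (fun s => (s.map t).sum) (multiset_eq_of_cubicIndex_eq hindex)
  obtain hi | hj | hk : a + t i' < 0 ∨ b + t j' < 0 ∨ d + t k' < 0 := by omega
  · rw [hx i' hi, zero_mul, zero_mul]
  · rw [hy j' hj, mul_zero, zero_mul]
  · rw [hz k' hk, mul_zero]

theorem v3DiscCoeffs_eq (c : Fin 18 → R) :
    v3DiscCoeffs c =
      4 • linearFormsMul (v3Form c 0 0) (v3Form c 1 1) (v3Form c 2 2)
        + linearFormsMul (v3Form c 0 1) (v3Form c 0 2) (v3Form c 1 2)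
        - linearFormsMul (v3Form c 0 0) (v3Form c 1 2) (v3Form c 1 2)
        - linearFormsMul (v3Form c 1 1) (v3Form c 0 2) (v3Form c 0 2)
        - linearFormsMul (v3Form c 2 2) (v3Form c 0 1) (v3Form c 0 1) := by
  ext m
  fin_cases m <;>
    simp only [v3DiscCoeffs, linearFormsMul, cubicIndex, v3Form, Fin.sum_univ_three, Pi.add_apply,
      Pi.sub_apply, Pi.smul_apply, Matrix.cons_val, Fin.isValue, Fin.reduceFinMk, Fin.zero_eta,
      Fin.mk_one, Fin.reduceCastLE, Fin.reduceAdd, Fin.reduceEq, ↓reduceIte] <;>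
    ring

theorem v3DiscCoeffs_cubicIndex_eq_zero_of_weight_neg {t u : Fin 3 → ℤ} (hu : ∑ i, u i = 0)
    {c : Fin 18 → R} (hc : ∀ i j k, u i + u j + t k < 0 → v3Form c i j k = 0) {i j k : Fin 3}
    (h : t i + t j + t k < 0) : v3DiscCoeffs c (cubicIndex i j k) = 0 := by
  rw [Fin.sum_univ_three] at hu
  have hmul (p q r p' q' r' : Fin 3) (hp : u p + u p' + (u q + u q') + (u r + u r') = 0) :
      linearFormsMul (v3Form c p p') (v3Form c q q') (v3Form c r r') (cubicIndex i j k) = 0 :=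
    linearFormsMul_cubicIndex_eq_zero_of_weight_neg (hc p p') (hc q q') (hc r r') (by omega)
  simp only [v3DiscCoeffs_eq, Pi.add_apply, Pi.sub_apply, Pi.smul_apply]
  rw [hmul, hmul, hmul, hmul, hmul] <;> first | omega | simp

theorem exists_ne_add_self_neg_add_neg {u : Fin 3 → ℤ} (hu : ∑ i, u i = 0) (hu₀ : u ≠ 0) :
    ∃ i j, i ≠ j ∧ u i + u i < 0 ∧ u i + u j < 0 := by
  simp only [Fin.sum_univ_three, ne_eq, funext_iff, Pi.zero_apply, forall_fin_three,
    exists_fin_three, Fin.isValue, Fin.reduceEq, not_true_eq_false, not_false_eq_true,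
    one_ne_zero, zero_ne_one, false_and, true_and] at hu hu₀ ⊢
  omega

theorem exists_v3DiscCoeffs_eq_linearFormsMul_self {c : Fin 18 → R} {i j : Fin 3} (hij : i ≠ j)
    (hi : v3Form c i i = 0) (hj : v3Form c i j = 0) :
    ∃ x y, v3DiscCoeffs c = linearFormsMul x y y := by
  obtain ⟨k, hki, hkj⟩ : ∃ k, k ≠ i ∧ k ≠ j :=
    Fin.exists_ne_and_ne_of_two_lt i j (by decide)
  refine ⟨-v3Form c j j, v3Form c i k, ?_⟩
  have hj' : v3Form c j i = 0 := v3Form_comm c i j ▸ hj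
  rw [v3DiscCoeffs_eq, linearFormsMul_neg_left]
  fin_cases i <;> fin_cases j <;> fin_cases k <;>
    simp_all [v3Form_comm c 1 0, v3Form_comm c 2 0, v3Form_comm c 2 1]

theorem aronholdDisc_v3DiscCoeffs_eq_zero {t u : Fin 3 → ℤ} (ht : ∑ i, t i = 0)
    (hu : ∑ i, u i = 0) (htu : ¬(t = 0 ∧ u = 0)) {c : Fin 18 → R}
    (hc : ∀ i j k, u i + u j + t k < 0 → v3Form c i j k = 0) :
    aronholdDisc (v3DiscCoeffs c) = 0 := by
  by_cases ht₀ : t = 0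
  · obtain ⟨i, j, hij, hii, hij'⟩ := exists_ne_add_self_neg_add_neg hu (fun hu₀ => htu ⟨ht₀, hu₀⟩)
    obtain ⟨x, y, hxy⟩ := exists_v3DiscCoeffs_eq_linearFormsMul_self hij
      (funext fun k => hc i i k (by simpa [ht₀] using hii))
      (funext fun k => hc i j k (by simpa [ht₀] using hij'))
    rw [hxy, aronholdDisc_linearFormsMul_self]
  · exact aronholdDisc_eq_zero_of_weight_neg ht ht₀
      fun i j k => v3DiscCoeffs_cubicIndex_eq_zero_of_weight_neg hu hc

theorem map_v3DiscCoeffs {R' : Type*} [CommRing R'] (f : R →+* R') (c : Fin 18 → R) :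
    f ∘ v3DiscCoeffs c = v3DiscCoeffs (f ∘ c) := by
  ext m
  fin_cases m <;> simp [v3DiscCoeffs, map_ofNat]

theorem map_Delta3 {R' : Type*} [CommRing R'] (f : R →+* R') (P : MvPolynomial (Fin 10) ℤ)
    (c : Fin 18 → R) : f (Delta3 P c) = Delta3 P (f ∘ c) := by
  rw [Delta3, Delta3, ← map_v3DiscCoeffs]
  exact MvPolynomial.comp_aeval_apply (v3DiscCoeffs c) f.toIntAlgHom P

theorem mul_Delta3_eq_aronholdDisc {P : MvPolynomial (Fin 10) ℤ}
    (hP : 1728 * P = aronholdDisc MvPolynomial.X) (c : Fin 18 → R) :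
    1728 * Delta3 P c = aronholdDisc (v3DiscCoeffs c) := by
  let f : MvPolynomial (Fin 10) ℤ →+* R := MvPolynomial.aeval (R := ℤ) (v3DiscCoeffs c)
  have hX : f ∘ MvPolynomial.X = v3DiscCoeffs c := funext fun m => by simp [f]
  rw [← hX, ← map_aronholdDisc, ← hP]
  simp [f, Delta3]

theorem exists_mvPolynomial_lift {ι : Type*} (c : ι → R) :
    ∃ C : ι → MvPolynomial ι ℤ,
      (∀ i, c i = 0 → C i = 0) ∧ MvPolynomial.aeval (R := ℤ) c ∘ C = c := by
  classical
  refine ⟨fun i => if c i = 0 then 0 else MvPolynomial.X i, fun i hi => if_pos hi,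
    funext fun i => ?_⟩
  by_cases hi : c i = 0 <;> simp [hi]

theorem Delta3_eq_zero_of_no_negative_weights_general {P : MvPolynomial (Fin 10) ℤ}
    (hP : 1728 * P = aronholdDisc MvPolynomial.X) {t u : Fin 3 → ℤ} (ht : ∑ i, t i = 0)
    (hu : ∑ i, u i = 0) (htu : ¬(t = 0 ∧ u = 0)) {c : Fin 18 → R}
    (hc : ∀ i j k, u i + u j + t k < 0 → v3Form c i j k = 0) : Delta3 P c = 0 := by
  obtain ⟨C, hC, hCc⟩ := exists_mvPolynomial_lift c
  have hlift : 1728 * Delta3 P C = 0 :=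
    (mul_Delta3_eq_aronholdDisc hP C).trans <|
      aronholdDisc_v3DiscCoeffs_eq_zero ht hu htu fun i j k h => hC _ (hc i j k h)
  have hzero : Delta3 P C = 0 := (mul_eq_zero.mp hlift).resolve_left (by norm_num)
  have h := map_Delta3 (MvPolynomial.aeval (R := ℤ) c : _ →+* R) P C
  rw [hzero, map_zero] at h
  exact (h.trans (congrArg _ hCc)).symm

end

/-
STATEMENT 2 (Lemma 3.3 / `lem-invar3`): for every nonzero (s₁,s₂,s₃,s₄) ∈ ℤ⁴, if all
coordinates of v ∈ V₃ whose weight (with respect to the corresponding cocharacter of the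
maximal torus of SL₃ × SL₃) is negative vanish, then Δ₃(v) = 0.  The coordinates
c 0,…,c 17 correspond to a,b,c,d,e,f,g,h,i,j,k,l,m,n,o,p,q,r of the paper.
-/
theorem Delta3_eq_zero_of_no_negative_weights
    {L : Type*} [Field L] [IsAlgClosed L]
    (disc3 : MvPolynomial (Fin 10) ℤ)
    (hdisc3 : 1728 * disc3 =
      aronholdS (MvPolynomial.X 0) (MvPolynomial.X 1) (MvPolynomial.X 2) (MvPolynomial.X 3)
          (MvPolynomial.X 4) (MvPolynomial.X 5) (MvPolynomial.X 6) (MvPolynomial.X 7)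
          (MvPolynomial.X 8) (MvPolynomial.X 9) ^ 3 -
      aronholdT (MvPolynomial.X 0) (MvPolynomial.X 1) (MvPolynomial.X 2) (MvPolynomial.X 3)
          (MvPolynomial.X 4) (MvPolynomial.X 5) (MvPolynomial.X 6) (MvPolynomial.X 7)
          (MvPolynomial.X 8) (MvPolynomial.X 9) ^ 2)
    (s₁ s₂ s₃ s₄ : ℤ) (hs : ¬(s₁ = 0 ∧ s₂ = 0 ∧ s₃ = 0 ∧ s₄ = 0))
    (c : Fin 18 → L)
    (h0 : (s₁ + 2*s₃ : ℤ) < 0 → c 0 = 0)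
    (h1 : (s₂ + 2*s₃ : ℤ) < 0 → c 1 = 0)
    (h2 : (-s₁ - s₂ + 2*s₃ : ℤ) < 0 → c 2 = 0)
    (h3 : (s₁ + 2*s₄ : ℤ) < 0 → c 3 = 0)
    (h4 : (s₂ + 2*s₄ : ℤ) < 0 → c 4 = 0)
    (h5 : (-s₁ - s₂ + 2*s₄ : ℤ) < 0 → c 5 = 0)
    (h6 : (s₁ - 2*s₃ - 2*s₄ : ℤ) < 0 → c 6 = 0)
    (h7 : (s₂ - 2*s₃ - 2*s₄ : ℤ) < 0 → c 7 = 0)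
    (h8 : (-s₁ - s₂ - 2*s₃ - 2*s₄ : ℤ) < 0 → c 8 = 0)
    (h9 : (s₁ + s₃ + s₄ : ℤ) < 0 → c 9 = 0)
    (h10 : (s₂ + s₃ + s₄ : ℤ) < 0 → c 10 = 0)
    (h11 : (-s₁ - s₂ + s₃ + s₄ : ℤ) < 0 → c 11 = 0)
    (h12 : (s₁ - s₄ : ℤ) < 0 → c 12 = 0)
    (h13 : (s₂ - s₄ : ℤ) < 0 → c 13 = 0)
    (h14 : (-s₁ - s₂ - s₄ : ℤ) < 0 → c 14 = 0)
    (h15 : (s₁ - s₃ : ℤ) < 0 → c 15 = 0)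
    (h16 : (s₂ - s₃ : ℤ) < 0 → c 16 = 0)
    (h17 : (-s₁ - s₂ - s₃ : ℤ) < 0 → c 17 = 0) :
    Delta3 disc3 c = 0 := by
  have hc : ∀ i j k, ![s₃, s₄, -s₃ - s₄] i + ![s₃, s₄, -s₃ - s₄] j + ![s₁, s₂, -s₁ - s₂] k < 0 →
      v3Form c i j k = 0 := by
    clear hdisc3
    simp only [forall_fin_three, v3Form, Matrix.cons_val, Fin.isValue, Fin.reduceCastLE,
      Fin.reduceAdd, add_zero, zero_add]
    grind
  exact Delta3_eq_zero_of_no_negative_weights_general hdisc3 (by simp [Fin.sum_univ_three])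
    (by simp [Fin.sum_univ_three])
    (fun h => hs ⟨congrFun h.1 0, congrFun h.1 1, congrFun h.2 0, congrFun h.2 1⟩) hc
end

section
/- For every prime number p, taking L to be an algebraic closure of 𝔽_p, there exists a vector v ∈ V₃ all of whose 18 coefficients a,…,r lie in the prime subfield 𝔽_p and which is stable for the action of SL₃(L)×SL₃(L). (For instance, Δ₃((X+Z)T² + (X+Z)U² + ZW² + (Y+Z)TU + (X+Z)TW + YUW) = 225, which is nonzero in every 𝔽_p with p = 2, and for odd p dual cyclic vectors are stable.) -/
/- Zariski-closedness of a subset of affine n-space over L: it is the common zero locus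
of a set of polynomial functions (with respect to the fixed coordinates). -/
def IsZariskiClosed {n : ℕ} {L : Type*} [CommRing L] (s : Set (Fin n → L)) : Prop :=
  ∃ P : Set (MvPolynomial (Fin n) L), s = {x | ∀ p ∈ P, MvPolynomial.eval x p = 0}

/- The element of V₃ ⊆ L[X,Y,Z,T,U,W] (variables: inl 0,1,2 = X,Y,Z and inr 0,1,2 = T,U,W)
with coordinates c = (a,b,…,r):
v = (aX+bY+cZ)T² + (dX+eY+fZ)U² + (gX+hY+iZ)W² + (jX+kY+lZ)TU + (mX+nY+oZ)TW + (pX+qY+rZ)UW. -/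
noncomputable def toPoly3 {L : Type*} [CommRing L] (c : Fin 18 → L) :
    MvPolynomial (Fin 3 ⊕ Fin 3) L :=
  (MvPolynomial.C (c 0) * MvPolynomial.X (Sum.inl 0) + MvPolynomial.C (c 1) * MvPolynomial.X (Sum.inl 1)
      + MvPolynomial.C (c 2) * MvPolynomial.X (Sum.inl 2)) * MvPolynomial.X (Sum.inr 0) ^ 2
  + (MvPolynomial.C (c 3) * MvPolynomial.X (Sum.inl 0) + MvPolynomial.C (c 4) * MvPolynomial.X (Sum.inl 1)
      + MvPolynomial.C (c 5) * MvPolynomial.X (Sum.inl 2)) * MvPolynomial.X (Sum.inr 1) ^ 2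
  + (MvPolynomial.C (c 6) * MvPolynomial.X (Sum.inl 0) + MvPolynomial.C (c 7) * MvPolynomial.X (Sum.inl 1)
      + MvPolynomial.C (c 8) * MvPolynomial.X (Sum.inl 2)) * MvPolynomial.X (Sum.inr 2) ^ 2
  + (MvPolynomial.C (c 9) * MvPolynomial.X (Sum.inl 0) + MvPolynomial.C (c 10) * MvPolynomial.X (Sum.inl 1)
      + MvPolynomial.C (c 11) * MvPolynomial.X (Sum.inl 2)) * (MvPolynomial.X (Sum.inr 0) * MvPolynomial.X (Sum.inr 1))
  + (MvPolynomial.C (c 12) * MvPolynomial.X (Sum.inl 0) + MvPolynomial.C (c 13) * MvPolynomial.X (Sum.inl 1)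
      + MvPolynomial.C (c 14) * MvPolynomial.X (Sum.inl 2)) * (MvPolynomial.X (Sum.inr 0) * MvPolynomial.X (Sum.inr 2))
  + (MvPolynomial.C (c 15) * MvPolynomial.X (Sum.inl 0) + MvPolynomial.C (c 16) * MvPolynomial.X (Sum.inl 1)
      + MvPolynomial.C (c 17) * MvPolynomial.X (Sum.inl 2)) * (MvPolynomial.X (Sum.inr 1) * MvPolynomial.X (Sum.inr 2))

/- The action of SL₃(L) × SL₃(L) by linear substitution of (X,Y,Z) and (T,U,W). -/
noncomputable def act3 {L : Type*} [CommRing L]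
    (g : Matrix.SpecialLinearGroup (Fin 3) L × Matrix.SpecialLinearGroup (Fin 3) L)
    (v : MvPolynomial (Fin 3 ⊕ Fin 3) L) : MvPolynomial (Fin 3 ⊕ Fin 3) L :=
  MvPolynomial.aeval
    (Sum.elim (fun i => ∑ j : Fin 3, MvPolynomial.C (g.1.1 i j) * MvPolynomial.X (Sum.inl j))
              (fun i => ∑ j : Fin 3, MvPolynomial.C (g.2.1 i j) * MvPolynomial.X (Sum.inr j))) v

/- Stability: the orbit of v (in the coordinate space of V₃ with respect to its monomial
basis) is Zariski-closed and the stabilizer of v in SL₃(L) × SL₃(L) is finite. -/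
def Stable3 {L : Type*} [Field L] (c : Fin 18 → L) : Prop :=
  IsZariskiClosed {c' : Fin 18 → L |
    ∃ g : Matrix.SpecialLinearGroup (Fin 3) L × Matrix.SpecialLinearGroup (Fin 3) L,
      toPoly3 c' = act3 g (toPoly3 c)} ∧
  {g : Matrix.SpecialLinearGroup (Fin 3) L × Matrix.SpecialLinearGroup (Fin 3) L |
      act3 g (toPoly3 c) = toPoly3 c}.Finite

/-!
A net of conics is nondegenerate if its conics have no common zero and none of them is a double
line. For a nondegenerate net `v`, the orbit map `g ↦ g • v` on `SL₃ × SL₃` is integral. By the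
valuative criterion it suffices that `A` and `B` have integral entries whenever they are points
over a valued field that carry `v` to an integral net. The Cartan decomposition reduces this to
diagonal matrices, and there it is a Hilbert–Mumford estimate: a block of coefficients of `v`
that vanishes modulo the maximal ideal would exhibit a common zero or a double line over the
residue field. An integral orbit map has a closed image and finite fibres, so `v` is stable. It
remains to write down nondegenerate nets with integer coefficients: one works in every
characteristic but two, and another one in characteristic two.
-/

open Matrix

section Nets

variable {R S l m n : Type*} [CommSemiring R] [CommSemiring S]

/-- The vector of all degree-two monomials in the coordinates of `t`. -/
def veronese (t : n → R) (z : Sym2 n) : R := (z.map t).mul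

@[simp]
lemma veronese_mk (t : n → R) (a b : n) : veronese t s(a, b) = t a * t b := rfl

lemma map_veronese (f : R →+* S) (t : n → R) : f ∘ veronese t = veronese (f ∘ t) := by
  ext z
  induction z with | _ a b => simp

variable [Fintype n]

lemma map_mulVec_veronese (f : R →+* S) (C : Matrix m (Sym2 n) R) (t : n → R) :
    f ∘ (C *ᵥ veronese t) = C.map f *ᵥ veronese (f ∘ t) := by
  ext i
  simp [RingHom.map_mulVec, ← map_veronese]

lemma aeval_map_C_mulVec_veronese_X [Algebra R S]
    (C : Matrix m (Sym2 n) R) (t : n → S) (i : m) :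
    MvPolynomial.aeval t ((C.map MvPolynomial.C *ᵥ veronese MvPolynomial.X) i) =
      (C.map (algebraMap R S) *ᵥ veronese t) i := by
  have hX : ⇑(MvPolynomial.aeval t : _ →ₐ[R] S).toRingHom ∘ MvPolynomial.X = t :=
    funext fun j ↦ MvPolynomial.aeval_X t j
  have h := congrFun (map_mulVec_veronese (MvPolynomial.aeval t : _ →ₐ[R] S).toRingHom
    (C.map MvPolynomial.C) MvPolynomial.X) i
  rw [hX, map_map] at h
  exact h.trans (by congr 3; ext a; simp)

variable [Fintype m] [DecidableEq n]

/-- The second symmetric power of a matrix: the matrix of the substitution `t ↦ B *ᵥ t` on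
degree-two monomials. -/
def symSq (B : Matrix l n R) : Matrix (Sym2 l) (Sym2 n) R := fun w z ↦
  Sym2.lift ⟨fun a b ↦ ∑ p : n × n with s(p.1, p.2) = z, B a p.1 * B b p.2, fun a b ↦
    Finset.sum_equiv (Equiv.prodComm n n) (by simp [Sym2.eq_swap]) (by simp [mul_comm])⟩ w

lemma symSq_apply (B : Matrix l n R) (a b : l) (z : Sym2 n) :
    symSq B s(a, b) z = ∑ p : n × n with s(p.1, p.2) = z, B a p.1 * B b p.2 := rfl

lemma symSq_mulVec_apply (B : Matrix l n R) (f : Sym2 n → R) (a b : l) :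
    (symSq B *ᵥ f) s(a, b) = ∑ i, ∑ j, B a i * B b j * f s(i, j) := by
  simp only [mulVec, dotProduct, symSq_apply, Finset.sum_mul]
  rw [← Fintype.sum_prod_type', ← Finset.sum_fiberwise _ fun p : n × n ↦ s(p.1, p.2)]
  refine Finset.sum_congr rfl fun z _ ↦ Finset.sum_congr rfl fun p hp ↦ ?_
  rw [(Finset.mem_filter.mp hp).2]

lemma symSq_mulVec_veronese (B : Matrix l n R) (t : n → R) :
    symSq B *ᵥ veronese t = veronese (B *ᵥ t) := by
  ext z
  induction z with | _ a b =>
  rw [symSq_mulVec_apply]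
  simp only [veronese_mk, mulVec, dotProduct, Fintype.sum_mul_sum, mul_mul_mul_comm]

lemma symSq_mul [DecidableEq m] (A : Matrix l m R) (B : Matrix m n R) :
    symSq (A * B) = symSq A * symSq B := by
  ext w z
  induction w with | _ a b =>
  calc symSq (A * B) s(a, b) z
    _ = ∑ i, ∑ j, A a i * A b j * symSq B s(i, j) z := by
      simp only [symSq_apply, mul_apply, Fintype.sum_mul_sum]
      rw [Finset.sum_comm]
      refine Finset.sum_congr rfl fun i _ ↦ ?_
      rw [Finset.sum_comm]
      simp only [mul_mul_mul_comm, Finset.mul_sum]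
    _ = (symSq A * symSq B) s(a, b) z :=
      (symSq_mulVec_apply A (fun w ↦ symSq B w z) a b).symm

lemma symSq_diagonal (d : n → R) : symSq (diagonal d) = diagonal (veronese d) := by
  ext w z
  induction w with | _ a b =>
  calc symSq (diagonal d) s(a, b) z
    _ = (symSq (diagonal d) *ᵥ Pi.single z 1) s(a, b) := by simp
    _ = diagonal (veronese d) s(a, b) z := by
      rw [symSq_mulVec_apply, Finset.sum_eq_single a, Finset.sum_eq_single b] <;>
        simp +contextual [diagonal_apply, Pi.single_apply, eq_comm]

lemma map_symSq (f : R →+* S) (B : Matrix l n R) : (symSq B).map f = symSq (B.map f) := by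
  ext w z
  induction w with | _ a b => simp [symSq_apply]

/-- The action of a pair of matrices on nets of quadratic forms. A net is encoded by its matrix
of coefficients `C`, with one row for each variable in which it is linear and one column for each
degree-two monomial in the other variables, and the pair `(A, B)` acts by linear substitution. -/
def netAct (A : Matrix m m R) (B : Matrix n n R) (C : Matrix m (Sym2 n) R) :
    Matrix m (Sym2 n) R :=
  Aᵀ * C * symSq B

lemma netAct_mul (A A' : Matrix m m R) (B B' : Matrix n n R) (C : Matrix m (Sym2 n) R) :
    netAct (A * A') (B * B') C = netAct A' B' (netAct A B C) := by
  simp only [netAct, transpose_mul, symSq_mul, Matrix.mul_assoc]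

lemma map_netAct (f : R →+* S) (A : Matrix m m R) (B : Matrix n n R) (C : Matrix m (Sym2 n) R) :
    (netAct A B C).map f = netAct (A.map f) (B.map f) (C.map f) := by
  simp only [netAct, Matrix.map_mul, map_symSq, transpose_map]

lemma netAct_mulVec_veronese (A : Matrix m m R) (B : Matrix n n R) (C : Matrix m (Sym2 n) R)
    (t : n → R) : netAct A B C *ᵥ veronese t = Aᵀ *ᵥ (C *ᵥ veronese (B *ᵥ t)) := by
  simp only [netAct, ← mulVec_mulVec, symSq_mulVec_veronese]

variable [DecidableEq m]

lemma netAct_diagonal_apply (a : m → R) (b : n → R) (C : Matrix m (Sym2 n) R) (i : m) (j k : n) :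
    netAct (diagonal a) (diagonal b) C i s(j, k) = a i * b j * b k * C i s(j, k) := by
  rw [netAct, symSq_diagonal, mul_diagonal, diagonal_transpose, diagonal_mul, veronese_mk]
  ring

end Nets

section Coefficients

lemma sum_sym2_fin_three {M : Type*} [AddCommMonoid M] (f : Sym2 (Fin 3) → M) :
    ∑ z, f z = f s(0, 0) + f s(1, 1) + f s(2, 2) + f s(0, 1) + f s(0, 2) + f s(1, 2) := by
  have huniv : (Finset.univ : Finset (Sym2 (Fin 3))) =
      {s(0, 0), s(1, 1), s(2, 2), s(0, 1), s(0, 2), s(1, 2)} := by decide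
  have hne : (s(0, 1) : Sym2 (Fin 3)) ≠ s(1, 2) ∧ (s(0, 2) : Sym2 (Fin 3)) ≠ s(1, 2) := by decide
  rw [huniv]
  simp [hne, add_assoc]

lemma mulVec_veronese_fin_three {R m : Type*} [CommSemiring R] (C : Matrix m (Sym2 (Fin 3)) R)
    (t : Fin 3 → R) (i : m) :
    (C *ᵥ veronese t) i = C i s(0, 0) * t 0 ^ 2 + C i s(1, 1) * t 1 ^ 2 + C i s(2, 2) * t 2 ^ 2 +
      C i s(0, 1) * (t 0 * t 1) + C i s(0, 2) * (t 0 * t 2) + C i s(1, 2) * (t 1 * t 2) := by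
  simp [mulVec, dotProduct, sum_sym2_fin_three, sq]

variable {R m n : Type*} [CommRing R]

lemma veronese_single [DecidableEq n] (j : n) :
    veronese (Pi.single j 1 : n → R) = Pi.single s(j, j) 1 := by
  ext z
  induction z with | _ a b =>
  by_cases ha : a = j <;> by_cases hb : b = j <;> simp [ha, hb]

lemma veronese_single_add_single [DecidableEq n] {j k : n} (hjk : j ≠ k) :
    veronese (Pi.single j 1 + Pi.single k 1 : n → R) =
      Pi.single s(j, j) 1 + Pi.single s(k, k) 1 + Pi.single s(j, k) 1 := by
  ext z
  induction z with | _ a b =>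
  simp only [veronese_mk, Pi.add_apply, Pi.single_apply, Sym2.eq_iff]
  grind

variable [Fintype n] {C D : Matrix m (Sym2 n) R}

lemma eq_of_forall_mulVec_veronese_eq (h : ∀ t, C *ᵥ veronese t = D *ᵥ veronese t) : C = D := by
  classical
  have hdiag (i : m) (j : n) : C i s(j, j) = D i s(j, j) := by
    simpa [veronese_single] using congrFun (h (Pi.single j 1)) i
  ext i z
  induction z with | _ j k =>
  obtain rfl | hjk := eq_or_ne j k
  · exact hdiag i j
  have hi := congrFun (h (Pi.single j 1 + Pi.single k 1)) i
  rw [veronese_single_add_single hjk] at hi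
  simpa [mulVec_add, hdiag] using hi

variable [Fintype m] {x : m → R} {l : n → R}

lemma vecMul_diag_of_dotProduct_eq_sq (h : ∀ t, x ⬝ᵥ C *ᵥ veronese t = (l ⬝ᵥ t) ^ 2) (j : n) :
    (x ᵥ* C) s(j, j) = l j ^ 2 := by
  classical
  have hj := h (Pi.single j 1)
  rwa [veronese_single, dotProduct_mulVec, dotProduct_single_one, dotProduct_single_one] at hj

lemma vecMul_offDiag_of_dotProduct_eq_sq (h : ∀ t, x ⬝ᵥ C *ᵥ veronese t = (l ⬝ᵥ t) ^ 2) {j k : n}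
    (hjk : j ≠ k) : (x ᵥ* C) s(j, k) = 2 * (l j * l k) := by
  classical
  have hjk' := h (Pi.single j 1 + Pi.single k 1)
  rw [veronese_single_add_single hjk] at hjk'
  simp only [dotProduct_mulVec, dotProduct_add, dotProduct_single_one,
    vecMul_diag_of_dotProduct_eq_sq h] at hjk'
  linear_combination hjk'

end Coefficients

section Integral

universe u

/-- The values at `s` of the monic polynomials over `R`. The element `s` is integral over `R` if
and only if zero is one of them. -/
def monicValues {R S : Type*} [CommRing R] [CommRing S] (φ : R →+* S) (s : S) : Submonoid S where
  carrier := {x | ∃ f : Polynomial R, f.Monic ∧ f.eval₂ φ s = x}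
  one_mem' := ⟨1, Polynomial.monic_one, Polynomial.eval₂_one φ s⟩
  mul_mem' := by
    rintro _ _ ⟨f, hf, rfl⟩ ⟨g, hg, rfl⟩
    exact ⟨f * g, hf.mul hg, Polynomial.eval₂_mul φ s⟩

lemma exists_monic_eval₂_eq_zero_of_isIntegral_range {R K : Type*} [CommRing R] [CommRing K]
    (φ : R →+* K) {x : K} (hx : IsIntegral φ.range x) :
    ∃ f : Polynomial R, f.Monic ∧ f.eval₂ φ x = 0 := by
  obtain ⟨g, hg, hgx⟩ := hx
  obtain ⟨f, rfl, -, hf⟩ := Polynomial.lifts_and_natDegree_eq_and_monic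
    (Polynomial.map_surjective _ φ.rangeRestrict_surjective g) hg
  exact ⟨f, hf, by rwa [Polynomial.eval₂_map] at hgx⟩

/-- The valuative criterion for integral morphisms. If `s` is not integral over `R`, then a prime
ideal avoiding all `f(s)` with `f` monic gives a residue field in which the image of `s` is not
integral over `R` either. -/
theorem isIntegral_of_forall_valuationSubring {R : Type*} {S : Type u} [CommRing R] [CommRing S]
    (φ : R →+* S)
    (h : ∀ (K : Type u) [Field K] (ψ : S →+* K) (O : ValuationSubring K),
      (∀ r, ψ (φ r) ∈ O) → ∀ s, ψ s ∈ O) : φ.IsIntegral := by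
  intro s
  by_contra hs
  have hdisj : Disjoint ((⊥ : Ideal S) : Set S) (monicValues φ s) := by
    rw [Set.disjoint_left]
    rintro _ rfl ⟨f, hf, hfs⟩
    exact hs ⟨f, hf, hfs⟩
  obtain ⟨P, hP, -, hPs⟩ := Ideal.exists_le_prime_disjoint _ _ hdisj
  let ψ : S →+* FractionRing (S ⧸ P) := (algebraMap (S ⧸ P) _).comp (Ideal.Quotient.mk P)
  have hψ : IsIntegral (ψ.comp φ).range (ψ s) := by
    have hmem : ψ s ∈ ⨅ V : {V : ValuationSubring (FractionRing (S ⧸ P)) //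
        ((ψ.comp φ).range : Set (FractionRing (S ⧸ P))) ⊆ V.toSubring}, V.1.toSubring :=
      Subring.mem_iInf.mpr fun ⟨V, hV⟩ ↦ h _ ψ V (fun r ↦ hV ⟨r, rfl⟩) s
    rwa [iInf_valuationSubring_superset, Subring.closure_eq] at hmem
  obtain ⟨f, hf, hfs⟩ := exists_monic_eval₂_eq_zero_of_isIntegral_range _ hψ
  refine Set.disjoint_left.mp hPs ?_ ⟨f, hf, rfl⟩
  rw [← Polynomial.hom_eval₂] at hfs
  exact Ideal.Quotient.eq_zero_iff_mem.mp
    ((map_eq_zero_iff _ (IsFractionRing.injective (S ⧸ P) (FractionRing (S ⧸ P)))).mp hfs)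

lemma exists_ringHom_comp_algebraMap_eq {R S L : Type*} [CommRing R] [CommRing S] [Algebra R S]
    [Algebra.IsIntegral R S] [Field L] [IsAlgClosed L] (ε : R →+* L)
    (hε : RingHom.ker (algebraMap R S) ≤ RingHom.ker ε) :
    ∃ ψ : S →+* L, ψ.comp (algebraMap R S) = ε := by
  have : (RingHom.ker ε).IsPrime := RingHom.ker_isPrime ε
  obtain ⟨Q, -, hQ, hQε⟩ :=
    Ideal.exists_ideal_over_prime_of_isIntegral (RingHom.ker ε) (⊥ : Ideal S) hε
  have : Q.LiesOver (RingHom.ker ε) := ⟨hQε.symm⟩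
  algebraize [RingHom.kerLift ε]
  have : Module.IsTorsionFree (R ⧸ RingHom.ker ε) L :=
    Module.isTorsionFree_iff_algebraMap_injective.mpr (RingHom.kerLift_injective ε)
  have : Module.IsTorsionFree (R ⧸ RingHom.ker ε) (S ⧸ Q) :=
    Module.isTorsionFree_iff_algebraMap_injective.mpr (FaithfulSMul.algebraMap_injective _ _)
  let ψ : S ⧸ Q →ₐ[R ⧸ RingHom.ker ε] L := IsAlgClosed.lift
  exact ⟨ψ.toRingHom.comp (Ideal.Quotient.mk Q),
    RingHom.ext fun r ↦ ψ.commutes (Ideal.Quotient.mk _ r)⟩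

theorem exists_algHom_comp_eq_of_isIntegral {A R S L : Type*} [CommRing A] [CommRing R]
    [CommRing S] [Field L] [IsAlgClosed L] [Algebra A R] [Algebra A S] [Algebra A L]
    (φ : R →ₐ[A] S) (hφ : φ.toRingHom.IsIntegral) (ε : R →ₐ[A] L)
    (hε : RingHom.ker φ ≤ RingHom.ker ε) : ∃ ψ : S →ₐ[A] L, ψ.comp φ = ε := by
  algebraize [φ.toRingHom]
  have : Algebra.IsIntegral R S := ⟨hφ⟩
  obtain ⟨ψ, hψ⟩ := exists_ringHom_comp_algebraMap_eq (S := S) ε.toRingHom hε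
  have hψφ (r : R) : ψ (φ r) = ε r := RingHom.congr_fun hψ r
  refine ⟨{ ψ with commutes' := fun a ↦ ?_ }, AlgHom.ext hψφ⟩
  exact (congrArg ψ (φ.commutes a)).symm.trans ((hψφ _).trans (ε.commutes a))

lemma finite_algHom_values_of_isIntegral {A R S L : Type*} [CommRing A] [CommRing R] [CommRing S]
    [CommRing L] [IsDomain L] [Algebra A R] [Algebra A S] [Algebra A L] (φ : R →ₐ[A] S)
    (hφ : φ.toRingHom.IsIntegral) (ε : R →ₐ[A] L) (s : S) :
    {x | ∃ ψ : S →ₐ[A] L, ψ.comp φ = ε ∧ ψ s = x}.Finite := by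
  obtain ⟨f, hf, hfs⟩ := hφ s
  refine ((f.map ε.toRingHom).rootSet_finite L).subset ?_
  rintro _ ⟨ψ, rfl, rfl⟩
  have hroot := congrArg ψ.toRingHom hfs
  rw [Polynomial.hom_eval₂, map_zero] at hroot
  rw [Polynomial.mem_rootSet, Polynomial.aeval_def, Polynomial.eval₂_map]
  exact ⟨(hf.map _).ne_zero, hroot⟩

end Integral

section ElementaryDivisors

variable {K n : Type*} [Field K] [Fintype n] [DecidableEq n] (O : ValuationSubring K)

/-- Equivalence of square matrices under multiplication on both sides by invertible matrices over
a valuation ring. -/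
def IntegrallyEquivalent (M N : Matrix n n K) : Prop :=
  ∃ P Q : Matrix n n O, IsUnit P.det ∧ IsUnit Q.det ∧ M = P.map O.subtype * N * Q.map O.subtype

variable {O}

namespace IntegrallyEquivalent

lemma refl (M : Matrix n n K) : IntegrallyEquivalent O M M :=
  ⟨1, 1, by simp⟩

lemma trans {M N N' : Matrix n n K} (h : IntegrallyEquivalent O M N)
    (h' : IntegrallyEquivalent O N N') : IntegrallyEquivalent O M N' := by
  obtain ⟨P, Q, hP, hQ, rfl⟩ := h
  obtain ⟨P', Q', hP', hQ', rfl⟩ := h'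
  refine ⟨P * P', Q' * Q, ?_, ?_, by simp only [Matrix.map_mul, Matrix.mul_assoc]⟩
  · rw [det_mul]
    exact hP.mul hP'
  · rw [det_mul]
    exact hQ'.mul hQ

lemma transpose {M N : Matrix n n K} (h : IntegrallyEquivalent O M N) :
    IntegrallyEquivalent O Mᵀ Nᵀ := by
  obtain ⟨P, Q, hP, hQ, rfl⟩ := h
  exact ⟨Qᵀ, Pᵀ, by rwa [det_transpose], by rwa [det_transpose],
    by simp only [transpose_mul, Matrix.mul_assoc, transpose_map]⟩

lemma submatrix (M : Matrix n n K) (σ τ : Equiv.Perm n) :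
    IntegrallyEquivalent O M (M.submatrix σ τ) := by
  have hdet (ρ : Equiv.Perm n) : IsUnit (ρ.permMatrix O).det := by
    rw [det_permutation]
    exact ρ.sign.isUnit.map (Int.castRingHom O)
  refine ⟨σ⁻¹.permMatrix O, τ.permMatrix O, hdet _, hdet _, ?_⟩
  simp only [Equiv.Perm.permMatrix, PEquiv.map_toMatrix, PEquiv.toMatrix_toPEquiv_mul,
    PEquiv.mul_toMatrix_toPEquiv]
  ext i j
  simp

lemma clear_column {M : Matrix n n K} {x : n}
    (hx : ∀ i, O.valuation (M i x) ≤ O.valuation (M x x)) :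
    IntegrallyEquivalent O M
      (of fun i j ↦ if i = x then M x j else M i j - M i x / M x x * M x j) := by
  have hmem (i : n) : M i x / M x x ∈ O := by
    rw [← O.valuation_le_one_iff, map_div₀]
    exact div_le_one_of_le₀ (hx i) zero_le
  let u (i : n) : O := if i = x then 0 else ⟨_, hmem i⟩
  refine ⟨1 + vecMulVec u (Pi.single x 1), 1, ?_, by simp, ?_⟩
  · rw [vecMulVec_eq Unit, det_one_add_replicateCol_mul_replicateRow]
    simp [u]
  · have hmap : (1 + vecMulVec u (Pi.single x 1)).map O.subtype
        = 1 + vecMulVec (fun i ↦ (u i : K)) (Pi.single x 1) := by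
      ext i j
      rcases eq_or_ne i j with rfl | hij <;> simp [vecMulVec_apply, Pi.single_apply, *] <;>
        split_ifs <;> simp
    rw [hmap, Matrix.add_mul, Matrix.one_mul, vecMulVec_mul, single_one_vecMul]
    ext i j
    by_cases hi : i = x <;> simp [u, vecMulVec_apply, hi]

lemma clear_cross {M : Matrix n n K} {x : n}
    (hcol : ∀ i, O.valuation (M i x) ≤ O.valuation (M x x))
    (hrow : ∀ j, O.valuation (M x j) ≤ O.valuation (M x x)) :
    IntegrallyEquivalent O M (of fun i j ↦
      if i = x ∨ j = x then if i = j then M x x else 0 else M i j - M i x / M x x * M x j) := by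
  have hcancel {y : K} (hy : O.valuation y ≤ O.valuation (M x x)) : y / M x x * M x x = y :=
    div_mul_cancel_of_imp fun h0 ↦ by simpa [h0] using hy
  have h := clear_column hcol
  generalize hN : of _ = N at h
  have hrowN : ∀ j, O.valuation (Nᵀ j x) ≤ O.valuation (Nᵀ x x) := by simpa [← hN] using hrow
  convert h.trans (clear_column hrowN).transpose using 1
  ext i j
  by_cases hi : i = x <;> by_cases hj : j = x
  · simp [← hN, hi, hj]
  · simp [← hN, hi, hj, Ne.symm hj, hcancel (hrow j)]
  · simp [← hN, hi, hj, hcancel (hcol i)]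
  · simp [← hN, hi, hj, hcancel (hcol i)]

end IntegrallyEquivalent

/-- The off-diagonal entries of a matrix vanish in the rows and columns indexed by `s`. This is
the state of the diagonalization algorithm once the pivots in `s` have been treated. -/
def IsDiagonalAlong (s : Finset n) (M : Matrix n n K) : Prop :=
  ∀ ⦃i j⦄, i ≠ j → i ∈ s ∨ j ∈ s → M i j = 0

lemma IsDiagonalAlong.exists_pivot {s : Finset n} {M : Matrix n n K} (hM : IsDiagonalAlong s M)
    {x : n} (hx : x ∉ s) :
    ∃ N, IntegrallyEquivalent O M N ∧ IsDiagonalAlong s N ∧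
      ∀ i ∉ s, ∀ j ∉ s, O.valuation (N i j) ≤ O.valuation (N x x) := by
  obtain ⟨⟨p, q⟩, hpq, hmax⟩ := (sᶜ ×ˢ sᶜ).exists_max_image (fun i ↦ O.valuation (M i.1 i.2))
    ⟨(x, x), by simpa using hx⟩
  obtain ⟨hp, hq⟩ : p ∉ s ∧ q ∉ s := by simpa using hpq
  have hfix {y : n} (hy : y ∉ s) {i : n} (hi : i ∈ s) : Equiv.swap x y i = i :=
    Equiv.swap_apply_of_ne_of_ne (by grind) (by grind)
  have hmem {y : n} (hy : y ∉ s) {i : n} (hi : i ∉ s) : Equiv.swap x y i ∉ s := by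
    rw [Equiv.swap_apply_def]
    split_ifs <;> assumption
  refine ⟨_, .submatrix M (Equiv.swap x p) (Equiv.swap x q), fun i j hij hs ↦ ?_,
    fun i hi j hj ↦ ?_⟩
  · rcases hs with hi | hj
    · rw [submatrix_apply, hfix hp hi]
      exact hM (fun h ↦ hij (by rwa [← (Equiv.swap x q).injective.eq_iff, hfix hq hi])) (.inl hi)
    · rw [submatrix_apply, hfix hq hj]
      exact hM (fun h ↦ hij (by rwa [← (Equiv.swap x p).injective.eq_iff, hfix hp hj])) (.inr hj)
  · simpa using hmax (Equiv.swap x p i, Equiv.swap x q j) (by simp [hmem hp hi, hmem hq hj])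

lemma exists_integrallyEquivalent_isDiagonalAlong (M : Matrix n n K) (s : Finset n) :
    ∃ N, IntegrallyEquivalent O M N ∧ IsDiagonalAlong s N := by
  induction s using Finset.induction_on with
  | empty => exact ⟨M, .refl M, by simp [IsDiagonalAlong]⟩
  | insert x s hx ih =>
    obtain ⟨N, hMN, hN⟩ := ih
    obtain ⟨N', hNN', hN', hmax⟩ := hN.exists_pivot (O := O) hx
    have hcol (i : n) : O.valuation (N' i x) ≤ O.valuation (N' x x) := by
      by_cases hi : i ∈ s
      · simp [hN' (ne_of_mem_of_not_mem hi hx) (.inl hi)]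
      · exact hmax i hi x hx
    have hrow (j : n) : O.valuation (N' x j) ≤ O.valuation (N' x x) := by
      by_cases hj : j ∈ s
      · simp [hN' (ne_of_mem_of_not_mem hj hx).symm (.inr hj)]
      · exact hmax x hx j hj
    refine ⟨_, hMN.trans (hNN'.trans (.clear_cross hcol hrow)), fun i j hij hs ↦ ?_⟩
    rw [of_apply]
    split_ifs with hx'
    · rfl
    · have hs' : i ∈ s ∨ j ∈ s := by grind
      have hprod : N' i x * N' x j = 0 := by
        rcases hs' with hi | hj
        · simp [hN' (ne_of_mem_of_not_mem hi hx) (.inl hi)]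
        · simp [hN' (ne_of_mem_of_not_mem hj hx).symm (.inr hj)]
      rw [hN' hij hs', div_mul_eq_mul_div, hprod, zero_div, sub_zero]

lemma exists_integrallyEquivalent_diagonal {d : ℕ} (M : Matrix (Fin d) (Fin d) K) :
    ∃ a : Fin d → K, Antitone (O.valuation ∘ a) ∧ IntegrallyEquivalent O M (diagonal a) := by
  obtain ⟨N, hMN, hN⟩ := exists_integrallyEquivalent_isDiagonalAlong (O := O) M Finset.univ
  obtain ⟨a, rfl⟩ : ∃ a, N = diagonal a := by
    refine ⟨N.diag, ext fun i j ↦ ?_⟩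
    rcases eq_or_ne i j with rfl | hij
    · simp
    · rw [diagonal_apply_ne _ hij, hN hij (by simp)]
  let σ := Tuple.sort (OrderDual.toDual ∘ O.valuation ∘ a)
  refine ⟨a ∘ σ, Tuple.monotone_sort (OrderDual.toDual ∘ O.valuation ∘ a), hMN.trans ?_⟩
  have h := IntegrallyEquivalent.submatrix (O := O) (diagonal a) σ σ
  rwa [submatrix_diagonal_equiv] at h

end ElementaryDivisors

section Nondegenerate

variable {m n : Type*} [Fintype m] [Fintype n]

/-- A net of quadratic forms is nondegenerate if its members have no common zero and none of them
is the square of a linear form. -/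
structure IsNondegenerate {R : Type*} [CommRing R] (C : Matrix m (Sym2 n) R) : Prop where
  eq_zero_of_mulVec_eq_zero : ∀ t, C *ᵥ veronese t = 0 → t = 0
  eq_zero_of_dotProduct_eq_sq : ∀ x l, (∀ t, x ⬝ᵥ C *ᵥ veronese t = (l ⬝ᵥ t) ^ 2) → x = 0

protected lemma IsNondegenerate.netAct {R : Type*} [CommRing R] [DecidableEq m] [DecidableEq n]
    {C : Matrix m (Sym2 n) R} (hC : IsNondegenerate C) {A : Matrix m m R} {B : Matrix n n R}
    (hA : IsUnit A.det) (hB : IsUnit B.det) : IsNondegenerate (netAct A B C) := by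
  have hAt : IsUnit Aᵀ := by rwa [isUnit_iff_isUnit_det, det_transpose]
  rw [← isUnit_iff_isUnit_det] at hA hB
  refine ⟨fun t ht ↦ ?_, fun x l h ↦ ?_⟩
  · rw [netAct_mulVec_veronese] at ht
    refine mulVec_injective_of_isUnit hB (.trans ?_ (mulVec_zero B).symm)
    exact hC.eq_zero_of_mulVec_eq_zero _
      (mulVec_injective_of_isUnit hAt (ht.trans (mulVec_zero _).symm))
  · refine mulVec_injective_of_isUnit hA (.trans ?_ (mulVec_zero A).symm)
    refine hC.eq_zero_of_dotProduct_eq_sq _ (l ᵥ* B⁻¹) fun t ↦ ?_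
    have ht := h (B⁻¹ *ᵥ t)
    have hBt : B *ᵥ B⁻¹ *ᵥ t = t := by
      rw [mulVec_mulVec, mul_nonsing_inv _ ((isUnit_iff_isUnit_det _).mp hB), one_mulVec]
    rwa [netAct_mulVec_veronese, hBt, dotProduct_mulVec, vecMul_transpose,
      dotProduct_mulVec l] at ht

lemma aeval_eq_zero_of_forall_eval_eq_zero {σ L k : Type*} [Finite σ] [Field L] [IsAlgClosed L]
    [CommRing k] [IsReduced k] [Algebra L k] {P : Set (MvPolynomial σ L)} {q : MvPolynomial σ L}
    (h : ∀ x : σ → L, (∀ p ∈ P, MvPolynomial.eval x p = 0) → MvPolynomial.eval x q = 0)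
    {y : σ → k} (hy : ∀ p ∈ P, MvPolynomial.aeval y p = 0) : MvPolynomial.aeval y q = 0 := by
  have hq : q ∈ (Ideal.span P).radical := by
    rw [← MvPolynomial.vanishingIdeal_zeroLocus_eq_radical (K := L)]
    intro x hx
    exact h x fun p hp ↦ hx p (Ideal.subset_span hp)
  obtain ⟨N, hN⟩ := hq
  have hle : Ideal.span P ≤ RingHom.ker (MvPolynomial.aeval y) := Ideal.span_le.mpr hy
  exact eq_zero_of_pow_eq_zero (n := N) ((map_pow _ q N).symm.trans (hle hN))

/-- By Hilbert's Nullstellensatz, nondegeneracy over an algebraically closed field is geometric. -/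
lemma IsNondegenerate.map {L k : Type*} [Field L] [IsAlgClosed L] [CommRing k] [IsReduced k]
    {C : Matrix m (Sym2 n) L} (hC : IsNondegenerate C) (f : L →+* k) :
    IsNondegenerate (C.map f) := by
  algebraize [f]
  have hf (z : L) : algebraMap L k z = f z := rfl
  refine ⟨fun t ht ↦ ?_, fun x l h ↦ ?_⟩
  · ext j
    have h := aeval_eq_zero_of_forall_eval_eq_zero (q := MvPolynomial.X j) (y := t)
      (P := Set.range fun i ↦ (C.map MvPolynomial.C *ᵥ veronese MvPolynomial.X) i) ?_ ?_
    · simpa using h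
    · intro y hy
      simp only [Set.forall_mem_range, ← MvPolynomial.coe_aeval_eq_eval] at hy
      have hCy : C *ᵥ veronese y = 0 := funext fun i ↦ by
        have hCy := (aeval_map_C_mulVec_veronese_X C y i).symm.trans (hy i)
        rwa [Algebra.algebraMap_self, RingHom.coe_id, Matrix.map_id] at hCy
      simp [hC.eq_zero_of_mulVec_eq_zero y hCy]
    · rintro _ ⟨i, rfl⟩
      rw [aeval_map_C_mulVec_veronese_X]
      exact congrFun ht i
  · ext i
    let p (t : n → L) : MvPolynomial (m ⊕ n) L :=
      (fun i ↦ MvPolynomial.X (.inl i)) ⬝ᵥ (fun i ↦ MvPolynomial.C ((C *ᵥ veronese t) i)) -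
        ((fun j ↦ MvPolynomial.X (.inr j)) ⬝ᵥ fun j ↦ MvPolynomial.C (t j)) ^ 2
    have hq := aeval_eq_zero_of_forall_eval_eq_zero (P := Set.range p)
      (q := MvPolynomial.X (.inl i)) (y := Sum.elim x l) ?_ ?_
    · simpa using hq
    · rintro y hy
      have := hC.eq_zero_of_dotProduct_eq_sq (y ∘ .inl) (y ∘ .inr) fun t ↦ by
        have := hy _ ⟨t, rfl⟩
        simpa [p, dotProduct, sub_eq_zero] using this
      simpa using congrFun this i
    · rintro _ ⟨t, rfl⟩
      have := h (f ∘ t)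
      rw [← map_mulVec_veronese] at this
      simpa [p, dotProduct, sub_eq_zero, hf] using this

end Nondegenerate

section Excluded

lemma IsNondegenerate.not_base_point {R : Type*} [CommRing R] [Nontrivial R]
    {C : Matrix (Fin 3) (Sym2 (Fin 3)) R} (hC : IsNondegenerate C) :
    ¬ ∀ i ≤ 2, ∀ j ≤ 0, ∀ k ≤ 0, C i s(j, k) = 0 := by
  intro h
  have ht := hC.eq_zero_of_mulVec_eq_zero ![1, 0, 0] (funext fun i ↦ by
    simp [mulVec_veronese_fin_three, h i (Fin.le_last i)])
  simpa using congrFun ht 0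

variable {k : Type*} [Field k] [IsAlgClosed k]

lemma exists_binary_quadratic_root (a b c : k) :
    ∃ s t : k, (s ≠ 0 ∨ t ≠ 0) ∧ a * s ^ 2 + b * (s * t) + c * t ^ 2 = 0 := by
  by_cases ha : a = 0
  · exact ⟨1, 0, by simp, by simp [ha]⟩
  · have hdeg : (Polynomial.C a * Polynomial.X ^ 2 + Polynomial.C b * Polynomial.X
        + Polynomial.C c).degree ≠ 0 := by
      rw [Polynomial.degree_quadratic ha]
      decide
    obtain ⟨s, hs⟩ := IsAlgClosed.exists_root _ hdeg
    exact ⟨s, 1, by simp, by simpa [Polynomial.IsRoot] using hs⟩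

lemma exists_square_in_pencil (a b c a' b' c' : k) :
    ∃ x y l m : k, (x ≠ 0 ∨ y ≠ 0) ∧ x * a + y * a' = l ^ 2 ∧ x * b + y * b' = 2 * (l * m) ∧
      x * c + y * c' = m ^ 2 := by
  obtain ⟨x, y, hxy, h⟩ := exists_binary_quadratic_root (b ^ 2 - 4 * a * c)
    (2 * b * b' - 4 * (a * c' + a' * c)) (b' ^ 2 - 4 * a' * c')
  obtain ⟨l, hl⟩ := IsAlgClosed.exists_pow_nat_eq (x * a + y * a') (n := 2) (by simp)
  obtain ⟨m, hm⟩ := IsAlgClosed.exists_pow_nat_eq (x * c + y * c') (n := 2) (by simp)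
  have hsq : (x * b + y * b') ^ 2 = (2 * (l * m)) ^ 2 := by
    rw [mul_pow, mul_pow, hl, hm]
    linear_combination h
  rcases sq_eq_sq_iff_eq_or_eq_neg.mp hsq with hb | hb
  · exact ⟨x, y, l, m, hxy, hl.symm, hb, hm.symm⟩
  · exact ⟨x, y, l, -m, hxy, hl.symm, by rw [hb]; ring, by rw [← hm]; ring⟩

namespace IsNondegenerate

variable {C : Matrix (Fin 3) (Sym2 (Fin 3)) k}

lemma not_common_line (hC : IsNondegenerate C) :
    ¬ ∀ i ≤ 1, ∀ j ≤ 1, ∀ k ≤ 1, C i s(j, k) = 0 := by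
  intro h
  obtain ⟨s, t, hst, hroot⟩ :=
    exists_binary_quadratic_root (C 2 s(0, 0)) (C 2 s(0, 1)) (C 2 s(1, 1))
  have ht := hC.eq_zero_of_mulVec_eq_zero ![s, t, 0] (funext fun i ↦ by
    rcases le_or_gt i 1 with hi | hi
    · simp [mulVec_veronese_fin_three, h i hi]
    · obtain rfl : i = 2 := by omega
      simp only [mulVec_veronese_fin_three, Pi.zero_apply]
      simpa [add_right_comm] using hroot)
  exact hst.elim (· (by simpa using congrFun ht 0)) (· (by simpa using congrFun ht 1))

lemma not_double_line (hC : IsNondegenerate C) :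
    ¬ ∀ i ≤ 0, ∀ j ≤ 1, ∀ k ≤ 2, C i s(j, k) = 0 := by
  intro h
  obtain ⟨l, hl⟩ := IsAlgClosed.exists_pow_nat_eq (C 0 s(2, 2)) (n := 2) (by simp)
  have hx := hC.eq_zero_of_dotProduct_eq_sq ![1, 0, 0] ![0, 0, l] fun t ↦ by
    simp [dotProduct, Fin.sum_univ_three, mulVec_veronese_fin_three, h, ← hl, mul_pow]
  simpa using congrFun hx 0

lemma not_common_vertex (hC : IsNondegenerate C) :
    ¬ ∀ i ≤ 1, ∀ j ≤ 0, ∀ k ≤ 2, C i s(j, k) = 0 := by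
  intro h
  obtain ⟨x, y, l, m, hxy, ha, hb, hd⟩ := exists_square_in_pencil
    (C 0 s(1, 1)) (C 0 s(1, 2)) (C 0 s(2, 2)) (C 1 s(1, 1)) (C 1 s(1, 2)) (C 1 s(2, 2))
  have hx := hC.eq_zero_of_dotProduct_eq_sq ![x, y, 0] ![0, l, m] fun t ↦ by
    simp only [dotProduct, mulVec_veronese_fin_three, Fin.sum_univ_three, cons_val_zero, zero_le,
      le_refl, h, zero_mul, zero_add, Fin.reduceLE, add_zero, cons_val_one, cons_val]
    linear_combination t 1 ^ 2 * ha + t 1 * t 2 * hb + t 2 ^ 2 * hd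
  exact hxy.elim (· (by simpa using congrFun hx 0)) (· (by simpa using congrFun hx 1))

end IsNondegenerate

end Excluded

section Integrality

lemma weights_le_one {Γ : Type*} [LinearOrderedCommGroupWithZero Γ] {α β : Fin 3 → Γ}
    (hα : α 0 * α 1 * α 2 = 1) (hβ : β 0 * β 1 * β 2 = 1) (h012 : α 0 * β 1 * β 2 ≤ 1)
    (h200 : α 2 * β 0 * β 0 ≤ 1) (h111 : α 1 * β 1 * β 1 ≤ 1) (h102 : α 1 * β 0 * β 2 ≤ 1) :
    α 0 ≤ 1 ∧ β 0 ≤ 1 := by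
  have hβ₀ : 0 < β 0 := zero_lt_iff.mpr fun h ↦ by simp [h] at hβ
  have hα₀ : α 0 ≤ β 0 := calc
    α 0 = α 0 * (β 0 * β 1 * β 2) := by rw [hβ, mul_one]
    _ = β 0 * (α 0 * β 1 * β 2) := by ac_rfl
    _ ≤ β 0 := mul_le_of_le_one_right' h012
  have hα₁ : α 1 ≤ β 1 := calc
    α 1 = α 1 * (β 0 * β 1 * β 2) := by rw [hβ, mul_one]
    _ = β 1 * (α 1 * β 0 * β 2) := by ac_rfl
    _ ≤ β 1 := mul_le_of_le_one_right' h102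
  have hsq : β 0 * β 0 ≤ α 0 * α 1 := calc
    β 0 * β 0 = α 0 * α 1 * α 2 * (β 0 * β 0) := by rw [hα, one_mul]
    _ = α 0 * α 1 * (α 2 * β 0 * β 0) := by ac_rfl
    _ ≤ α 0 * α 1 := mul_le_of_le_one_right' h200
  have hβα : β 0 ≤ α 1 := le_of_mul_le_mul_left (hsq.trans (mul_le_mul_left hα₀ _)) hβ₀
  have hβ₁ : β 0 ≤ 1 := by
    refine (pow_le_one_iff (three_ne_zero)).mp ?_
    calc β 0 ^ 3 = β 0 * β 0 * β 0 := pow_three' _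
      _ ≤ α 1 * β 1 * β 1 := mul_le_mul' (mul_le_mul' hβα (hβα.trans hα₁)) (hβα.trans hα₁)
      _ ≤ 1 := h111
  exact ⟨hα₀.trans hβ₁, hβ₁⟩

variable {K : Type*} [Field K] {O : ValuationSubring K}

lemma mul_valuation_le_one {k : Type*} [Field k] (f : O →+* k) [IsLocalHom f]
    {C : Matrix (Fin 3) (Sym2 (Fin 3)) O} {a b : Fin 3 → K}
    (ha : Antitone (O.valuation ∘ a)) (hb : Antitone (O.valuation ∘ b))
    (h : ∀ i j k, a i * b j * b k * C i s(j, k) ∈ O) {i₀ j₀ k₀ : Fin 3}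
    (hC : ¬ ∀ i ≤ i₀, ∀ j ≤ j₀, ∀ k ≤ k₀, f (C i s(j, k)) = 0) :
    O.valuation (a i₀) * O.valuation (b j₀) * O.valuation (b k₀) ≤ 1 := by
  push Not at hC
  obtain ⟨i, hi, j, hj, k, hk, hne⟩ := hC
  have hunit : O.valuation (C i s(j, k) : K) = 1 :=
    (O.valuation_eq_one_iff _).mp (isUnit_of_map_unit f _ hne.isUnit)
  calc O.valuation (a i₀) * O.valuation (b j₀) * O.valuation (b k₀)
    _ ≤ O.valuation (a i) * O.valuation (b j) * O.valuation (b k) :=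
      mul_le_mul' (mul_le_mul' (ha hi) (hb hj)) (hb hk)
    _ = O.valuation (a i * b j * b k * C i s(j, k)) := by simp only [map_mul, hunit, mul_one]
    _ ≤ 1 := (O.valuation_le_one_iff _).mpr (h i j k)

lemma IntegrallyEquivalent.valuation_det_eq {n : Type*} [Fintype n] [DecidableEq n]
    {M N : Matrix n n K} (h : IntegrallyEquivalent O M N) :
    O.valuation M.det = O.valuation N.det := by
  obtain ⟨P, Q, hP, hQ, rfl⟩ := h
  have hdet {P : Matrix n n O} (hP : IsUnit P.det) : O.valuation (P.map O.subtype).det = 1 := by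
    rw [← RingHom.mapMatrix_apply, ← RingHom.map_det]
    exact (O.valuation_eq_one_iff _).mp hP
  rw [det_mul, det_mul, map_mul, map_mul, hdet hP, hdet hQ, one_mul, mul_one]

lemma IsNondegenerate.mem_of_netAct_diagonal_mem {k : Type*} [Field k] [IsAlgClosed k]
    (f : O →+* k) [IsLocalHom f] {C : Matrix (Fin 3) (Sym2 (Fin 3)) O}
    (hC : IsNondegenerate (C.map f)) {a b : Fin 3 → K} (ha : Antitone (O.valuation ∘ a))
    (hb : Antitone (O.valuation ∘ b)) (hadet : O.valuation (diagonal a).det = 1)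
    (hbdet : O.valuation (diagonal b).det = 1)
    (h : ∀ i z, netAct (diagonal a) (diagonal b) (C.map O.subtype) i z ∈ O) :
    (∀ i, a i ∈ O) ∧ ∀ j, b j ∈ O := by
  have hle {i₀ j₀ k₀ : Fin 3} := mul_valuation_le_one (i₀ := i₀) (j₀ := j₀) (k₀ := k₀) f ha hb
    fun i j k ↦ netAct_diagonal_apply a b (C.map O.subtype) i j k ▸ h i s(j, k)
  rw [det_diagonal, Fin.prod_univ_three, map_mul, map_mul] at hadet hbdet
  obtain ⟨ha₀, hb₀⟩ := weights_le_one (α := O.valuation ∘ a) (β := O.valuation ∘ b) hadet hbdet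
    (hle hC.not_double_line) (hle hC.not_base_point) (hle hC.not_common_line)
    (hle hC.not_common_vertex)
  exact ⟨fun i ↦ (O.valuation_le_one_iff _).mp ((ha (Fin.zero_le i)).trans ha₀),
    fun j ↦ (O.valuation_le_one_iff _).mp ((hb (Fin.zero_le j)).trans hb₀)⟩

/-- The Cartan decomposition of both matrices reduces the claim to diagonal matrices. -/
theorem IsNondegenerate.mem_of_netAct_mem {k : Type*} [Field k] [IsAlgClosed k]
    (f : O →+* k) [IsLocalHom f] {C D : Matrix (Fin 3) (Sym2 (Fin 3)) O}
    (hC : IsNondegenerate (C.map f)) {A B : Matrix (Fin 3) (Fin 3) K}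
    (hA : O.valuation A.det = 1) (hB : O.valuation B.det = 1)
    (hD : netAct A B (C.map O.subtype) = D.map O.subtype) :
    (∀ i j, A i j ∈ O) ∧ ∀ i j, B i j ∈ O := by
  obtain ⟨a, ha, hAa⟩ := exists_integrallyEquivalent_diagonal (O := O) A
  obtain ⟨b, hb, hBb⟩ := exists_integrallyEquivalent_diagonal (O := O) B
  rw [hAa.valuation_det_eq] at hA
  rw [hBb.valuation_det_eq] at hB
  obtain ⟨P, Q, hP, hQ, rfl⟩ := hAa
  obtain ⟨P', Q', hP', hQ', rfl⟩ := hBb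
  have hC' : IsNondegenerate ((netAct P P' C).map f) := by
    rw [map_netAct]
    refine hC.netAct ?_ ?_ <;> rw [← RingHom.mapMatrix_apply, ← RingHom.map_det]
    exacts [hP.map f, hP'.map f]
  have hinv {Q : Matrix (Fin 3) (Fin 3) O} (hQ : IsUnit Q.det) :
      Q.map O.subtype * Q⁻¹.map O.subtype = 1 := by
    rw [← Matrix.map_mul, mul_nonsing_inv _ hQ, Matrix.map_one _ (map_zero _) (map_one _)]
  have hdiag : netAct (diagonal a) (diagonal b) ((netAct P P' C).map O.subtype) =
      (netAct Q⁻¹ Q'⁻¹ D).map O.subtype := by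
    rw [map_netAct, map_netAct, ← hD, ← netAct_mul, ← netAct_mul, Matrix.mul_assoc _ _ (Q⁻¹.map _),
      Matrix.mul_assoc _ _ (Q'⁻¹.map _), hinv hQ, hinv hQ', Matrix.mul_one, Matrix.mul_one]
  obtain ⟨ha_mem, hb_mem⟩ := hC'.mem_of_netAct_diagonal_mem f ha hb hA hB fun i z ↦ by
    rw [hdiag]
    exact (netAct Q⁻¹ Q'⁻¹ D i z).2
  have hmem (P Q : Matrix (Fin 3) (Fin 3) O) {a : Fin 3 → K} (ha : ∀ i, a i ∈ O) (i j : Fin 3) :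
      (P.map O.subtype * diagonal a * Q.map O.subtype) i j ∈ O := by
    rw [mul_apply]
    refine sum_mem fun l _ ↦ mul_mem ?_ (Q l j).2
    rw [mul_diagonal]
    exact mul_mem (P i l).2 (ha l)
  exact ⟨hmem P Q ha_mem, hmem P' Q' hb_mem⟩

end Integrality

section CoordinateRing

universe u

lemma exists_isLocalHom_isAlgClosed (R : Type u) [CommRing R] [IsLocalRing R] :
    ∃ (k : Type u) (_ : Field k) (_ : IsAlgClosed k) (f : R →+* k), IsLocalHom f :=
  ⟨AlgebraicClosure (IsLocalRing.ResidueField R), inferInstance, inferInstance,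
    (algebraMap (IsLocalRing.ResidueField R) _).comp (IsLocalRing.residue R),
    RingHom.isLocalHom_comp _ _⟩

lemma det_map_quotientMk_eq_one {n R : Type*} [Fintype n] [DecidableEq n] [CommRing R]
    {I : Ideal R} {M : Matrix n n R} (h : M.det - 1 ∈ I) :
    (M.map (Ideal.Quotient.mk I)).det = 1 := by
  rw [← RingHom.mapMatrix_apply, ← RingHom.map_det, Ideal.Quotient.eq.mpr h, map_one]

variable (m n L : Type*) [Fintype m] [Fintype n] [DecidableEq m] [DecidableEq n] [CommRing L]

/-- The coordinate ring of `SLₘ × SLₙ`, generated by the entries of two generic matrices whose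
determinants are set equal to one. -/
abbrev SLProdRing : Type _ :=
  MvPolynomial (m × m ⊕ n × n) L ⧸ Ideal.span
    {(of fun i j ↦ (MvPolynomial.X (.inl (i, j)) : MvPolynomial (m × m ⊕ n × n) L)).det - 1,
      (of fun i j ↦ (MvPolynomial.X (.inr (i, j)) : MvPolynomial (m × m ⊕ n × n) L)).det - 1}

namespace SLProdRing

/-- The universal point of `SLₘ × SLₙ`, with coordinates in the coordinate ring. -/
noncomputable def universalPoint :
    SpecialLinearGroup m (SLProdRing m n L) × SpecialLinearGroup n (SLProdRing m n L) :=
  (⟨_, det_map_quotientMk_eq_one (Ideal.subset_span (Set.mem_insert _ _))⟩,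
    ⟨_, det_map_quotientMk_eq_one (Ideal.subset_span (Set.mem_insert_of_mem _ rfl))⟩)

variable {m n L} {S : Type*} [CommRing S]

/-- The point of `SLₘ × SLₙ` corresponding to a homomorphism on the coordinate ring. -/
noncomputable def mapPoint (ψ : SLProdRing m n L →+* S) :
    SpecialLinearGroup m S × SpecialLinearGroup n S :=
  (SpecialLinearGroup.map ψ (universalPoint m n L).1,
    SpecialLinearGroup.map ψ (universalPoint m n L).2)

lemma map_mem_of_mapPoint_mem (ψ : SLProdRing m n L →+* S) (O : Subring S)
    (hL : ∀ x, ψ (algebraMap L _ x) ∈ O) (h₁ : ∀ i j, (mapPoint ψ).1 i j ∈ O)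
    (h₂ : ∀ i j, (mapPoint ψ).2 i j ∈ O) (s : SLProdRing m n L) : ψ s ∈ O := by
  obtain ⟨f, rfl⟩ := Ideal.Quotient.mk_surjective s
  induction f using MvPolynomial.induction_on with
  | C a => exact hL a
  | add f g hf hg =>
    rw [map_add, map_add]
    exact add_mem hf hg
  | mul_X f x hf =>
    rw [map_mul, map_mul]
    refine mul_mem hf ?_
    rcases x with x | x
    exacts [h₁ x.1 x.2, h₂ x.1 x.2]

lemma exists_algHom_mapPoint_eq [Algebra L S]
    (g : SpecialLinearGroup m S × SpecialLinearGroup n S) :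
    ∃ ψ : SLProdRing m n L →ₐ[L] S, mapPoint ψ.toRingHom = g := by
  let φ : MvPolynomial (m × m ⊕ n × n) L →ₐ[L] S :=
    MvPolynomial.aeval (Sum.elim (fun x ↦ g.1 x.1 x.2) fun x ↦ g.2 x.1 x.2)
  refine ⟨Ideal.Quotient.liftₐ _ φ fun a ha ↦ ?_, ?_⟩
  · refine RingHom.mem_ker.mp (Ideal.span_le.mpr ?_ ha)
    rintro _ (rfl | rfl) <;>
      rw [SetLike.mem_coe, RingHom.mem_ker, map_sub, map_one, sub_eq_zero, AlgHom.map_det]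
    · refine Eq.trans (congrArg det ?_) g.1.2
      ext i j
      simp [φ]
    · refine Eq.trans (congrArg det ?_) g.2.2
      ext i j
      simp [φ]
  · exact Prod.ext (Subtype.ext (ext fun i j ↦ MvPolynomial.aeval_X _ (Sum.inl (i, j))))
      (Subtype.ext (ext fun i j ↦ MvPolynomial.aeval_X _ (Sum.inr (i, j))))

variable (C : Matrix m (Sym2 n) L)

/-- The comorphism of the orbit map `(A, B) ↦ netAct A B C`. -/
noncomputable def orbitComorphism : MvPolynomial (m × Sym2 n) L →ₐ[L] SLProdRing m n L :=
  MvPolynomial.aeval fun x ↦ netAct (universalPoint m n L).1.1 (universalPoint m n L).2.1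
    (C.map (algebraMap L _)) x.1 x.2

lemma map_orbitComorphism_X (ψ : SLProdRing m n L →+* S) (x : m × Sym2 n) :
    ψ (orbitComorphism C (MvPolynomial.X x)) = netAct (mapPoint ψ).1.1 (mapPoint ψ).2.1
      (C.map (ψ.comp (algebraMap L _))) x.1 x.2 := by
  rw [orbitComorphism, MvPolynomial.aeval_X]
  exact congrFun₂ (map_netAct ψ _ _ _) x.1 x.2

lemma comp_orbitComorphism_eq_aeval_iff (ψ : SLProdRing m n L →ₐ[L] L) (D : Matrix m (Sym2 n) L) :
    ψ.comp (orbitComorphism C) = MvPolynomial.aeval (fun x ↦ D x.1 x.2) ↔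
      netAct (mapPoint ψ.toRingHom).1.1 (mapPoint ψ.toRingHom).2.1 C = D := by
  have hψ : ψ.toRingHom.comp (algebraMap L _) = RingHom.id L := RingHom.ext ψ.commutes
  have hX (x : m × Sym2 n) : ψ (orbitComorphism C (MvPolynomial.X x)) =
      netAct (mapPoint ψ.toRingHom).1.1 (mapPoint ψ.toRingHom).2.1 C x.1 x.2 := by
    refine (map_orbitComorphism_X C ψ.toRingHom x).trans ?_
    rw [hψ]
    rfl
  rw [MvPolynomial.algHom_ext_iff, Prod.forall, ← Matrix.ext_iff]
  simp [hX]

lemma orbit_eq_zeroLocus_of_isIntegral {L : Type*} [Field L] [IsAlgClosed L]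
    {C : Matrix m (Sym2 n) L} (hC : (orbitComorphism C).toRingHom.IsIntegral) :
    {D | ∃ g : SpecialLinearGroup m L × SpecialLinearGroup n L, netAct g.1.1 g.2.1 C = D} =
      {D | ∀ f, orbitComorphism C f = 0 → MvPolynomial.eval (fun x ↦ D x.1 x.2) f = 0} := by
  ext D
  constructor
  · rintro ⟨g, hg⟩ f hf
    obtain ⟨ψ, rfl⟩ := exists_algHom_mapPoint_eq (L := L) g
    have h := DFunLike.congr_fun ((comp_orbitComorphism_eq_aeval_iff C ψ D).mpr hg) f
    rw [AlgHom.comp_apply, hf, map_zero] at h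
    rw [← MvPolynomial.aeval_eq_eval, h]
  · intro hD
    obtain ⟨ψ, hψ⟩ := exists_algHom_comp_eq_of_isIntegral (orbitComorphism C) hC
      (MvPolynomial.aeval fun x ↦ D x.1 x.2) hD
    exact ⟨mapPoint ψ.toRingHom, (comp_orbitComorphism_eq_aeval_iff C ψ D).mp hψ⟩

lemma finite_stabilizer_of_isIntegral {L : Type*} [CommRing L] [IsDomain L]
    {C : Matrix m (Sym2 n) L} (hC : (orbitComorphism C).toRingHom.IsIntegral) :
    {g : SpecialLinearGroup m L × SpecialLinearGroup n L | netAct g.1.1 g.2.1 C = C}.Finite := by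
  let T (s : SLProdRing m n L) : Set L :=
    {x | ∃ ψ : SLProdRing m n L →ₐ[L] L,
      ψ.comp (orbitComorphism C) = MvPolynomial.aeval (fun x ↦ C x.1 x.2) ∧ ψ s = x}
  have hT (s : SLProdRing m n L) : (T s).Finite := finite_algHom_values_of_isIntegral _ hC _ s
  let e (g : SpecialLinearGroup m L × SpecialLinearGroup n L) : m × m ⊕ n × n → L :=
    Sum.elim (fun x ↦ g.1 x.1 x.2) fun x ↦ g.2 x.1 x.2
  have he : Function.Injective e := fun g g' h ↦
    Prod.ext (Subtype.ext (ext fun i j ↦ congrFun h (.inl (i, j))))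
      (Subtype.ext (ext fun i j ↦ congrFun h (.inr (i, j))))
  have hfin := Set.Finite.pi fun x ↦ hT (Ideal.Quotient.mk _ (MvPolynomial.X x))
  refine .of_finite_image (hfin.subset ?_) he.injOn
  rintro _ ⟨g, hg, rfl⟩ x -
  obtain ⟨ψ, rfl⟩ := exists_algHom_mapPoint_eq (L := L) g
  refine ⟨ψ, (comp_orbitComorphism_eq_aeval_iff C ψ C).mpr hg, ?_⟩
  rcases x with x | x <;> rfl

theorem isIntegral_orbitComorphism {L : Type*} [Field L] [IsAlgClosed L]
    {C : Matrix (Fin 3) (Sym2 (Fin 3)) L} (hC : IsNondegenerate C) :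
    (orbitComorphism C).toRingHom.IsIntegral := by
  refine isIntegral_of_forall_valuationSubring _ fun K _ ψ O hO ↦ ?_
  have hL (x : L) : ψ (algebraMap L _ x) ∈ O := by
    simpa [← MvPolynomial.algebraMap_eq] using hO (MvPolynomial.C x)
  let ι : L →+* O := (ψ.comp (algebraMap L _)).codRestrict O.toSubring hL
  obtain ⟨k, _, _, f, _⟩ := exists_isLocalHom_isAlgClosed O
  let D : Matrix (Fin 3) (Sym2 (Fin 3)) O := of fun i z ↦ ⟨_, hO (MvPolynomial.X (i, z))⟩
  have hD : netAct (mapPoint ψ).1.1 (mapPoint ψ).2.1 ((C.map ι).map O.subtype) =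
      D.map O.subtype :=
    ext fun i z ↦ (map_orbitComorphism_X C ψ (i, z)).symm
  have hdet {M : Matrix (Fin 3) (Fin 3) K} (hM : M.det = 1) : O.valuation M.det = 1 := by
    rw [hM, map_one]
  obtain ⟨h₁, h₂⟩ := IsNondegenerate.mem_of_netAct_mem f (hC.map (f.comp ι))
    (hdet (mapPoint ψ).1.2) (hdet (mapPoint ψ).2.2) hD
  exact map_mem_of_mapPoint_mem ψ O.toSubring hL h₁ h₂

end SLProdRing

end CoordinateRing

section Coordinates

/-- The position of a monomial in the list of coordinates `(a, b, …, r)` of `V₃`: the monomials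
in `T, U, W` come in the order `T², U², W², TU, TW, UW`, each of them multiplied in turn by
`X, Y, Z`. -/
noncomputable def monomialIndex : Fin 3 × Sym2 (Fin 3) ≃ Fin 18 :=
  .ofBijective (fun x ↦ finProdFinEquiv (m := 6)
    (x.2.lift ⟨![![0, 3, 4], ![3, 1, 5], ![4, 5, 2]], by decide⟩, x.1)) (by decide)

variable {R : Type*}

/-- The coefficient matrix of the element of `V₃` with given coordinates, seen as a net of
quadratic forms in `T, U, W`. -/
noncomputable def coeffMatrix : (Fin 18 → R) ≃ Matrix (Fin 3) (Sym2 (Fin 3)) R :=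
  (monomialIndex.symm.arrowCongr (.refl R)).trans ((Equiv.curry _ _ _).trans of)

lemma coeffMatrix_apply (c : Fin 18 → R) (i : Fin 3) (z : Sym2 (Fin 3)) :
    coeffMatrix c i z = c (monomialIndex (i, z)) := rfl

variable [CommRing R]

lemma aeval_toPoly3 {S : Type*} [CommRing S] [Algebra R S] (c : Fin 18 → R)
    (s : Fin 3 ⊕ Fin 3 → S) :
    MvPolynomial.aeval s (toPoly3 c) = (s ∘ Sum.inl) ⬝ᵥ
      (coeffMatrix c).map (algebraMap R S) *ᵥ veronese (s ∘ Sum.inr) := by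
  simp [toPoly3, dotProduct, Fin.sum_univ_three, mulVec_veronese_fin_three, coeffMatrix_apply,
    monomialIndex, finProdFinEquiv]
  ring

lemma toPoly3_injective : Function.Injective (toPoly3 : (Fin 18 → R) → _) := by
  intro c d h
  refine coeffMatrix.injective (eq_of_forall_mulVec_veronese_eq fun t ↦ funext fun i ↦ ?_)
  have := congrArg (MvPolynomial.aeval (Sum.elim (Pi.single i 1) t)) h
  simpa [aeval_toPoly3, Algebra.algebraMap_self] using this

lemma act3_toPoly3 (g : SpecialLinearGroup (Fin 3) R × SpecialLinearGroup (Fin 3) R)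
    (c : Fin 18 → R) :
    act3 g (toPoly3 c) = toPoly3 (coeffMatrix.symm (netAct g.1.1 g.2.1 (coeffMatrix c))) := by
  rw [act3, aeval_toPoly3, ← MvPolynomial.aeval_X_left_apply (toPoly3 (coeffMatrix.symm _)),
    aeval_toPoly3, Equiv.apply_symm_apply, MvPolynomial.algebraMap_eq, map_netAct,
    netAct_mulVec_veronese, dotProduct_mulVec _ (transpose _), vecMul_transpose]
  rfl

lemma toPoly3_eq_act3_iff {g : SpecialLinearGroup (Fin 3) R × SpecialLinearGroup (Fin 3) R}
    {c c' : Fin 18 → R} :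
    toPoly3 c' = act3 g (toPoly3 c) ↔ netAct g.1.1 g.2.1 (coeffMatrix c) = coeffMatrix c' := by
  rw [act3_toPoly3, toPoly3_injective.eq_iff, Equiv.eq_symm_apply, eq_comm]

lemma coeffMatrix_mulVec_veronese (c : Fin 18 → R) (t : Fin 3 → R) :
    coeffMatrix c *ᵥ veronese t =
      ![c 0 * t 0 ^ 2 + c 3 * t 1 ^ 2 + c 6 * t 2 ^ 2 +
          c 9 * (t 0 * t 1) + c 12 * (t 0 * t 2) + c 15 * (t 1 * t 2),
        c 1 * t 0 ^ 2 + c 4 * t 1 ^ 2 + c 7 * t 2 ^ 2 +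
          c 10 * (t 0 * t 1) + c 13 * (t 0 * t 2) + c 16 * (t 1 * t 2),
        c 2 * t 0 ^ 2 + c 5 * t 1 ^ 2 + c 8 * t 2 ^ 2 +
          c 11 * (t 0 * t 1) + c 14 * (t 0 * t 2) + c 17 * (t 1 * t 2)] := by
  ext i
  fin_cases i <;>
    simp [mulVec_veronese_fin_three, coeffMatrix_apply, monomialIndex, finProdFinEquiv]

lemma vecMul_coeffMatrix (x : Fin 3 → R) (c : Fin 18 → R) (z : Sym2 (Fin 3)) :
    (x ᵥ* coeffMatrix c) z = x 0 * c (monomialIndex (0, z)) + x 1 * c (monomialIndex (1, z)) +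
      x 2 * c (monomialIndex (2, z)) := by
  simp [vecMul, dotProduct, Fin.sum_univ_three, coeffMatrix_apply]

theorem IsNondegenerate.stable3 {L : Type*} [Field L] [IsAlgClosed L] {c : Fin 18 → L}
    (hc : IsNondegenerate (coeffMatrix c)) : Stable3 c := by
  have hint := SLProdRing.isIntegral_orbitComorphism hc
  constructor
  · refine ⟨MvPolynomial.rename monomialIndex ''
      {f | SLProdRing.orbitComorphism (coeffMatrix c) f = 0}, Set.ext fun c' ↦ ?_⟩
    have horbit := Set.ext_iff.mp (SLProdRing.orbit_eq_zeroLocus_of_isIntegral hint)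
      (coeffMatrix c')
    simp only [Set.mem_ofPred_eq, toPoly3_eq_act3_iff, Set.forall_mem_image,
      MvPolynomial.eval_rename] at horbit ⊢
    exact horbit
  · simp only [eq_comm (a := act3 _ _), toPoly3_eq_act3_iff]
    exact SLProdRing.finite_stabilizer_of_isIntegral hint

end Coordinates

section Examples

/-- The coordinates of the net `X(T² + U²) + Y TW + Z(W² + TU)`, which is nondegenerate in every
characteristic other than two. -/
def oddNet (R : Type*) [Ring R] : Fin 18 → R :=
  ![1, 0, 0, 1, 0, 0, 0, 0, 1, 0, 0, 1, 0, 1, 0, 0, 0, 0]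

/-- The coordinates of the net `X(UW + W²) + Y(T² + U² + TW) + Z TU`, which is nondegenerate in
characteristic two. -/
def evenNet (R : Type*) [Ring R] : Fin 18 → R :=
  ![0, 1, 0, 0, 1, 0, 1, 0, 0, 0, 0, 1, 0, 1, 0, 1, 0, 0]

variable {k : Type*} [Field k]

lemma isNondegenerate_oddNet (h2 : (2 : k) ≠ 0) : IsNondegenerate (coeffMatrix (oddNet k)) := by
  refine ⟨fun t ht ↦ ?_, fun x l h ↦ ?_⟩
  · have hX : t 0 ^ 2 + t 1 ^ 2 = 0 := by
      simpa [coeffMatrix_mulVec_veronese, oddNet] using congrFun ht 0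
    have hY : t 0 = 0 ∨ t 2 = 0 := by
      simpa [coeffMatrix_mulVec_veronese, oddNet] using congrFun ht 1
    have hZ : t 2 ^ 2 + t 0 * t 1 = 0 := by
      simpa [coeffMatrix_mulVec_veronese, oddNet] using congrFun ht 2
    ext i
    fin_cases i <;> simp <;> grind
  · have hT : x 0 = l 0 ^ 2 := by
      simpa [vecMul_coeffMatrix, monomialIndex, finProdFinEquiv, oddNet] using
        vecMul_diag_of_dotProduct_eq_sq h 0
    have hU : x 0 = l 1 ^ 2 := by
      simpa [vecMul_coeffMatrix, monomialIndex, finProdFinEquiv, oddNet] using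
        vecMul_diag_of_dotProduct_eq_sq h 1
    have hTU : x 2 = 2 * (l 0 * l 1) := by
      simpa [vecMul_coeffMatrix, monomialIndex, finProdFinEquiv, oddNet] using
        vecMul_offDiag_of_dotProduct_eq_sq h zero_ne_one
    have hTW : x 1 = 2 * (l 0 * l 2) := by
      simpa [vecMul_coeffMatrix, monomialIndex, finProdFinEquiv, oddNet] using
        vecMul_offDiag_of_dotProduct_eq_sq h (j := 0) (k := 2) (by decide)
    have hUW : l 1 = 0 ∨ l 2 = 0 := by
      simpa [vecMul_coeffMatrix, monomialIndex, finProdFinEquiv, oddNet, h2] using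
        vecMul_offDiag_of_dotProduct_eq_sq h (j := 1) (k := 2) (by decide)
    have hW : x 2 = l 2 ^ 2 := by
      simpa [vecMul_coeffMatrix, monomialIndex, finProdFinEquiv, oddNet] using
        vecMul_diag_of_dotProduct_eq_sq h 2
    ext i
    fin_cases i <;> simp <;> grind

lemma isNondegenerate_evenNet (h2 : (2 : k) = 0) : IsNondegenerate (coeffMatrix (evenNet k)) := by
  refine ⟨fun t ht ↦ ?_, fun x l h ↦ ?_⟩
  · have hX : t 2 ^ 2 + t 1 * t 2 = 0 := by
      simpa [coeffMatrix_mulVec_veronese, evenNet] using congrFun ht 0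
    have hY : t 0 ^ 2 + t 1 ^ 2 + t 0 * t 2 = 0 := by
      simpa [coeffMatrix_mulVec_veronese, evenNet] using congrFun ht 1
    have hZ : t 0 = 0 ∨ t 1 = 0 := by
      simpa [coeffMatrix_mulVec_veronese, evenNet] using congrFun ht 2
    ext i
    fin_cases i <;> simp <;> grind
  · have hmixed {j k : Fin 3} (hjk : j ≠ k) : (x ᵥ* coeffMatrix (evenNet _)) s(j, k) = 0 := by
      rw [vecMul_offDiag_of_dotProduct_eq_sq h hjk, h2, zero_mul]
    have hTU : x 2 = 0 := by
      simpa [vecMul_coeffMatrix, monomialIndex, finProdFinEquiv, evenNet] using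
        hmixed zero_ne_one
    have hTW : x 1 = 0 := by
      simpa [vecMul_coeffMatrix, monomialIndex, finProdFinEquiv, evenNet] using
        hmixed (j := 0) (k := 2) (by decide)
    have hUW : x 0 = 0 := by
      simpa [vecMul_coeffMatrix, monomialIndex, finProdFinEquiv, evenNet] using
        hmixed (j := 1) (k := 2) (by decide)
    ext i
    fin_cases i <;> assumption

end Examples

theorem exists_stable3_over_prime_field_general {L : Type*} [Field L] [IsAlgClosed L] :
    ∃ c : Fin 18 → L, (∀ i, ∃ z : ℤ, c i = (z : L)) ∧ Stable3 c := by
  by_cases h2 : (2 : L) = 0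
  · refine ⟨evenNet L, fun i ↦ ⟨evenNet ℤ i, ?_⟩, (isNondegenerate_evenNet h2).stable3⟩
    fin_cases i <;> simp [evenNet]
  · refine ⟨oddNet L, fun i ↦ ⟨oddNet ℤ i, ?_⟩, (isNondegenerate_oddNet h2).stable3⟩
    fin_cases i <;> simp [oddNet]

/-
STATEMENT 4 (Corollary 3.5(1)): for every prime p and L an algebraic closure of 𝔽_p,
there is a stable vector in V₃ all of whose 18 coordinates lie in the prime subfield
𝔽_p (i.e. are images of integers).
-/
theorem exists_stable3_over_prime_field
    (p : ℕ) (hp : p.Prime)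
    {L : Type*} [Field L] [IsAlgClosed L] [CharP L p] :
    ∃ c : Fin 18 → L, (∀ i, ∃ z : ℤ, c i = (z : L)) ∧ Stable3 c :=
  exists_stable3_over_prime_field_general
end
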